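/- arXiv:1705.06710 — 3 statements merged into one kernel-verified Lean document; each statement's English description precedes it below -/
import Mathlib

section
/- Let (X, μ) be a measure space, 1 < p < ∞, and let f, g ∈ L^p(μ) with ‖f‖_p = ‖g‖_p = 1. Suppose 0 < δ and (1/2)‖f + g‖_p > 1 - δ, and set ε = ‖f - g‖_p. Then: if 1 < p ≤ 2, ε ≤ √(8/(p-1)) · δ^{1/2}; and if 2 ≤ p < ∞, ε ≤ 2 p^{1/p} δ^{1/p}. -/
open MeasureTheory

/-!
Write `u = (f + g) / 2` and `v = (f - g) / 2`, so that `f = u + v` and `g = u - v`.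

For `1 < p ≤ 2` the theorem follows from the Ball–Carlen–Lieb inequality
`(‖u‖² + (p - 1) ‖v‖²) ^ (p / 2) ≤ (‖u + v‖ ^ p + ‖u - v‖ ^ p) / 2` in `L^p`
(`Lp_ball_carlen_lieb`): its right-hand side is `1`, hence
`(p - 1) ‖v‖² ≤ 1 - ‖u‖² ≤ 1 - (1 - δ)² ≤ 2 δ`.
The same inequality is first proved for complex numbers (`norm_two_point`). Since
`|u ± v|² = |u|² + |v|² ± 2 ⟪u, v⟫`, concavity of `t ↦ t ^ (p / 2)` shows that the right-hand
side is smallest when `u` and `v` are parallel, which leaves a scalar two-point inequality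
(`two_point_unit`). It is integrated with the reverse Minkowski inequality in `L^(p/2)`, here in
the form of Jensen's inequality for `t ↦ t ^ (p / 2)` with weights depending on `‖u‖` and `‖v‖`.

For `p ≥ 2`, Clarkson's inequality (`Lp_clarkson`) gives
`‖v‖ ^ p ≤ 1 - ‖u‖ ^ p ≤ 1 - (1 - δ) ^ p ≤ p δ` by Bernoulli's inequality.

When `δ ≥ 1` both bounds are weaker than the triangle inequality `‖f - g‖ ≤ 2`.
-/

namespace SharpUniformConvexity

/-- For `q = p - 1`, the difference of the two sides is, up to a factor `p`, the derivative of
the function shown to be monotone in `two_point_quadratic`. -/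
lemma two_mul_le_rpow_sub_rpow {q : ℝ} (hq0 : 0 ≤ q) (hq1 : q ≤ 1) {x : ℝ}
    (hx0 : 0 ≤ x) (hx1 : x < 1) :
    2 * q * x ≤ (1 + x) ^ q - (1 - x) ^ q := by
  have hd : ∀ y ∈ Set.Ico (0 : ℝ) 1, HasDerivAt
      (fun y : ℝ => (1 + y) ^ q - (1 - y) ^ q - 2 * q * y)
      (q * ((1 + y) ^ (q - 1) + (1 - y) ^ (q - 1) - 2)) y := by
    intro y hy
    have h1 : HasDerivAt (fun y : ℝ => (1 + y) ^ q) (1 * q * (1 + y) ^ (q - 1)) y :=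
      ((hasDerivAt_id y).const_add 1).rpow_const (Or.inl (by simp only [id]; linarith [hy.1]))
    have h2 : HasDerivAt (fun y : ℝ => (1 - y) ^ q) (-1 * q * (1 - y) ^ (q - 1)) y :=
      ((hasDerivAt_id y).const_sub 1).rpow_const (Or.inl (by simp only [id]; linarith [hy.2]))
    have h3 : HasDerivAt (fun y : ℝ => 2 * q * y) (2 * q * 1) y :=
      (hasDerivAt_id y).const_mul (2 * q)
    exact ((h1.sub h2).sub h3).congr_deriv (by ring)
  have hmono : MonotoneOn (fun y : ℝ => (1 + y) ^ q - (1 - y) ^ q - 2 * q * y)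
      (Set.Ico 0 1) := by
    apply monotoneOn_of_deriv_nonneg (convex_Ico 0 1)
    · exact fun y hy => (hd y hy).continuousAt.continuousWithinAt
    · exact fun y hy =>
        (hd y (interior_subset hy)).differentiableAt.differentiableWithinAt
    · intro y hy
      have hy' := interior_subset hy
      rw [(hd y hy').deriv]
      have ha : 0 < 1 + y := by linarith [hy'.1]
      have hb : 0 < 1 - y := by linarith [hy'.2]
      -- AM-GM: the two powers have product `(1 - y²) ^ (q - 1) ≥ 1`.
      have hprod : 1 ≤ (1 + y) ^ (q - 1) * (1 - y) ^ (q - 1) := by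
        rw [← Real.mul_rpow ha.le hb.le]
        exact Real.one_le_rpow_of_pos_of_le_one_of_nonpos (mul_pos ha hb)
          (by nlinarith [sq_nonneg y]) (by linarith)
      have hA := Real.rpow_pos_of_pos ha (q - 1)
      have hB := Real.rpow_pos_of_pos hb (q - 1)
      refine mul_nonneg hq0 ?_
      nlinarith [sq_nonneg ((1 + y) ^ (q - 1) - (1 - y) ^ (q - 1))]
  have := hmono (Set.left_mem_Ico.2 one_pos) ⟨hx0, hx1⟩ hx0
  simp only [add_zero, sub_zero, Real.one_rpow, mul_zero, sub_self] at this
  linarith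

/-- The even part of the binomial expansion of `(1 + x) ^ p` dominates its second-order
truncation. -/
lemma two_point_quadratic {p : ℝ} (hp1 : 1 < p) (hp2 : p ≤ 2) {x : ℝ}
    (hx0 : 0 ≤ x) (hx1 : x ≤ 1) :
    2 + p * (p - 1) * x ^ 2 ≤ (1 + x) ^ p + (1 - x) ^ p := by
  have hd : ∀ y : ℝ, HasDerivAt
      (fun y : ℝ => (1 + y) ^ p + (1 - y) ^ p - p * (p - 1) * y ^ 2)
      (p * ((1 + y) ^ (p - 1) - (1 - y) ^ (p - 1) - 2 * (p - 1) * y)) y := by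
    intro y
    have h1 : HasDerivAt (fun y : ℝ => (1 + y) ^ p) (1 * p * (1 + y) ^ (p - 1)) y :=
      ((hasDerivAt_id y).const_add 1).rpow_const (Or.inr hp1.le)
    have h2 : HasDerivAt (fun y : ℝ => (1 - y) ^ p) (-1 * p * (1 - y) ^ (p - 1)) y :=
      ((hasDerivAt_id y).const_sub 1).rpow_const (Or.inr hp1.le)
    have h3 : HasDerivAt (fun y : ℝ => p * (p - 1) * y ^ 2) (p * (p - 1) * (2 * y)) y := by
      simpa using (hasDerivAt_pow 2 y).const_mul (p * (p - 1))
    exact ((h1.add h2).sub h3).congr_deriv (by ring)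
  have hmono : MonotoneOn (fun y : ℝ => (1 + y) ^ p + (1 - y) ^ p - p * (p - 1) * y ^ 2)
      (Set.Icc 0 1) := by
    apply monotoneOn_of_deriv_nonneg (convex_Icc 0 1)
    · exact fun y _ => (hd y).continuousAt.continuousWithinAt
    · exact fun y _ => (hd y).differentiableAt.differentiableWithinAt
    · intro y hy
      rw [interior_Icc] at hy
      rw [(hd y).deriv]
      have := two_mul_le_rpow_sub_rpow (q := p - 1) (by linarith) (by linarith) hy.1.le hy.2
      exact mul_nonneg (by linarith) (by linarith)
  have := hmono (Set.left_mem_Icc.2 zero_le_one) ⟨hx0, hx1⟩ hx0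
  simp only [add_zero, sub_zero, Real.one_rpow] at this
  linarith

lemma two_point_unit {p : ℝ} (hp1 : 1 < p) (hp2 : p ≤ 2) {x : ℝ}
    (hx0 : 0 ≤ x) (hx1 : x ≤ 1) :
    2 * (1 + (p - 1) * x ^ 2) ^ (p / 2) ≤ (1 + x) ^ p + (1 - x) ^ p := by
  have h1 := two_point_quadratic hp1 hp2 hx0 hx1
  have h0 : 0 ≤ (p - 1) * x ^ 2 := mul_nonneg (by linarith) (sq_nonneg x)
  have h2 := rpow_one_add_le_one_add_mul_self (s := (p - 1) * x ^ 2) (by linarith)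
    (p := p / 2) (by linarith) (by linarith)
  nlinarith

lemma sq_rpow_half {a : ℝ} (ha : 0 ≤ a) (p : ℝ) : (a ^ 2) ^ (p / 2) = a ^ p := by
  rw [← Real.rpow_natCast, ← Real.rpow_mul ha]
  congr 1
  push_cast
  ring

lemma two_point_of_le {p : ℝ} (hp1 : 1 < p) (hp2 : p ≤ 2) {a b : ℝ}
    (hb : 0 ≤ b) (hab : b ≤ a) :
    2 * (a ^ 2 + (p - 1) * b ^ 2) ^ (p / 2) ≤ (a + b) ^ p + (a - b) ^ p := by
  rcases (hb.trans hab).eq_or_lt with rfl | ha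
  · obtain rfl : b = 0 := le_antisymm hab hb
    simp [Real.zero_rpow (show p ≠ 0 by linarith), Real.zero_rpow (show p / 2 ≠ 0 by linarith)]
  have hx1 : b / a ≤ 1 := (div_le_one ha).2 hab
  have hx0 : 0 ≤ b / a := by positivity
  have h := two_point_unit hp1 hp2 hx0 hx1
  have e1 : a + b = a * (1 + b / a) := by field_simp
  have e2 : a - b = a * (1 - b / a) := by field_simp
  have e3 : a ^ 2 + (p - 1) * b ^ 2 = a ^ 2 * (1 + (p - 1) * (b / a) ^ 2) := by field_simp
  have h0 : 0 ≤ (p - 1) * (b / a) ^ 2 := mul_nonneg (by linarith) (sq_nonneg _)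
  rw [e1, e2, e3, Real.mul_rpow ha.le (by linarith), Real.mul_rpow ha.le (by linarith),
    Real.mul_rpow (by positivity) (by linarith), sq_rpow_half ha.le]
  nlinarith [Real.rpow_pos_of_pos ha p]

lemma two_point {p : ℝ} (hp1 : 1 < p) (hp2 : p ≤ 2) {a b : ℝ} (ha : 0 ≤ a) (hb : 0 ≤ b) :
    2 * (a ^ 2 + (p - 1) * b ^ 2) ^ (p / 2) ≤ (a + b) ^ p + |a - b| ^ p := by
  rcases le_total b a with h | h
  · rw [abs_of_nonneg (sub_nonneg.2 h)]
    exact two_point_of_le hp1 hp2 hb h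
  · -- Since `p - 1 ≤ 1`, exchanging the roles of `a ≤ b` only increases the left-hand side.
    rw [abs_sub_comm, abs_of_nonneg (sub_nonneg.2 h), add_comm a b]
    refine le_trans ?_ (two_point_of_le hp1 hp2 ha h)
    have : 0 ≤ (p - 1) * b ^ 2 := mul_nonneg (by linarith) (sq_nonneg _)
    have h2 : a ^ 2 ≤ b ^ 2 := by gcongr
    gcongr 2 * ?_
    refine Real.rpow_le_rpow (by positivity) ?_ (by linarith)
    nlinarith

/-- The even concave function `t ↦ (s + t) ^ q + (s - t) ^ q` decreases in `|t|`. -/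
lemma rpow_add_rpow_anti {q : ℝ} (hq0 : 0 ≤ q) (hq1 : q ≤ 1) {s t T : ℝ}
    (ht : |t| ≤ T) (hT : T ≤ s) :
    (s + T) ^ q + (s - T) ^ q ≤ (s + t) ^ q + (s - t) ^ q := by
  have hT0 : 0 ≤ T := (abs_nonneg t).trans ht
  rcases hT0.eq_or_lt with rfl | hTpos
  · obtain rfl : t = 0 := abs_nonpos_iff.1 ht
    exact le_rfl
  obtain ⟨h1, h2⟩ := abs_le.1 ht
  have hc := Real.concaveOn_rpow hq0 hq1
  have hA : s + T ∈ Set.Ici (0 : ℝ) := by simp only [Set.mem_Ici]; linarith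
  have hB : s - T ∈ Set.Ici (0 : ℝ) := by simp only [Set.mem_Ici]; linarith
  -- `s ± t` are convex combinations of `s + T` and `s - T` with the weights `(T ± t) / (2T)`.
  have hw1 : 0 ≤ (T + t) / (2 * T) := div_nonneg (by linarith) (by linarith)
  have hw2 : 0 ≤ (T - t) / (2 * T) := div_nonneg (by linarith) (by linarith)
  have hw : (T + t) / (2 * T) + (T - t) / (2 * T) = 1 := by field_simp; ring
  have c1 := hc.2 hA hB hw1 hw2 hw
  have c2 := hc.2 hA hB hw2 hw1 (by rw [add_comm]; exact hw)
  simp only [smul_eq_mul] at c1 c2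
  have e1 : (T + t) / (2 * T) * (s + T) + (T - t) / (2 * T) * (s - T) = s + t := by
    field_simp; ring
  have e2 : (T - t) / (2 * T) * (s + T) + (T + t) / (2 * T) * (s - T) = s - t := by
    field_simp; ring
  rw [e1] at c1
  rw [e2] at c2
  have hw' : (T - t) / (2 * T) = 1 - (T + t) / (2 * T) := by linarith
  rw [hw'] at c1 c2
  linarith

/-- The Ball–Carlen–Lieb two-point inequality for complex numbers. -/
lemma norm_two_point {p : ℝ} (hp1 : 1 < p) (hp2 : p ≤ 2) (u v : ℂ) :
    2 * (‖u‖ ^ 2 + (p - 1) * ‖v‖ ^ 2) ^ (p / 2) ≤ ‖u + v‖ ^ p + ‖u - v‖ ^ p := by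
  refine (two_point hp1 hp2 (norm_nonneg u) (norm_nonneg v)).trans ?_
  have hin : |2 * inner ℝ u v| ≤ 2 * (‖u‖ * ‖v‖) := by
    rw [abs_mul, abs_two]
    gcongr
    exact abs_real_inner_le_norm u v
  have h := rpow_add_rpow_anti (q := p / 2) (by linarith) (by linarith)
    (s := ‖u‖ ^ 2 + ‖v‖ ^ 2) hin (by nlinarith [sq_nonneg (‖u‖ - ‖v‖)])
  have e1 : ‖u‖ ^ 2 + ‖v‖ ^ 2 + 2 * inner ℝ u v = ‖u + v‖ ^ 2 := by
    rw [norm_add_sq_real]; ring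
  have e2 : ‖u‖ ^ 2 + ‖v‖ ^ 2 - 2 * inner ℝ u v = ‖u - v‖ ^ 2 := by
    rw [norm_sub_sq_real]; ring
  have e3 : ‖u‖ ^ 2 + ‖v‖ ^ 2 + 2 * (‖u‖ * ‖v‖) = (‖u‖ + ‖v‖) ^ 2 := by ring
  have e4 : ‖u‖ ^ 2 + ‖v‖ ^ 2 - 2 * (‖u‖ * ‖v‖) = |‖u‖ - ‖v‖| ^ 2 := by rw [sq_abs]; ring
  rwa [e1, e2, e3, e4, sq_rpow_half (norm_nonneg _), sq_rpow_half (norm_nonneg _),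
    sq_rpow_half (by positivity), sq_rpow_half (abs_nonneg _)] at h

/-- Clarkson's inequality for complex numbers: superadditivity of `t ↦ t ^ (p / 2)`, the
parallelogram law, and convexity of `t ↦ t ^ (p / 2)`, in this order. -/
lemma norm_clarkson {p : ℝ} (hp : 2 ≤ p) (u v : ℂ) :
    ‖u‖ ^ p + ‖v‖ ^ p ≤ (‖u + v‖ ^ p + ‖u - v‖ ^ p) / 2 := by
  have h1 := Real.add_rpow_le_rpow_add (sq_nonneg ‖u‖) (sq_nonneg ‖v‖) (p := p / 2) (by linarith)
  have h2 := (convexOn_rpow (p := p / 2) (by linarith)).2 (sq_nonneg ‖u + v‖)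
    (sq_nonneg ‖u - v‖) (show (0 : ℝ) ≤ 1 / 2 by norm_num) (show (0 : ℝ) ≤ 1 / 2 by norm_num)
    (by norm_num)
  simp only [smul_eq_mul] at h2
  have e : 1 / 2 * ‖u + v‖ ^ 2 + 1 / 2 * ‖u - v‖ ^ 2 = ‖u‖ ^ 2 + ‖v‖ ^ 2 := by
    rw [norm_add_sq_real, norm_sub_sq_real]; ring
  rw [e] at h2
  simp only [sq_rpow_half (norm_nonneg _)] at h1 h2
  linarith

section Lp

variable {X : Type*} [MeasurableSpace X] {μ : Measure X} {p : ℝ}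

lemma Lp_integrable (hp : 1 < p) (f : Lp ℂ (ENNReal.ofReal p) μ) :
    Integrable (fun x => ‖f x‖ ^ p) μ := by
  have h := (Lp.memLp f).integrable_norm_rpow
    (by simpa using (by linarith : 0 < p)) ENNReal.ofReal_ne_top
  rwa [ENNReal.toReal_ofReal (by linarith)] at h

lemma Lp_norm_rpow (hp : 1 < p) (f : Lp ℂ (ENNReal.ofReal p) μ) :
    ‖f‖ ^ p = ∫ x, ‖f x‖ ^ p ∂μ := by
  have h0 : 0 ≤ ∫ x, ‖f x‖ ^ p ∂μ := integral_nonneg fun x => by positivity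
  rw [Lp.norm_def, (Lp.memLp f).eLpNorm_eq_integral_rpow_norm
    (by simpa using (by linarith : 0 < p)) ENNReal.ofReal_ne_top,
    ENNReal.toReal_ofReal (show 0 ≤ p by linarith), ENNReal.toReal_ofReal (by positivity),
    Real.rpow_inv_rpow h0 (by linarith)]

/-- Clarkson's inequality in `L^p`, `p ≥ 2`. -/
lemma Lp_clarkson (hp : 2 ≤ p) (u v : Lp ℂ (ENNReal.ofReal p) μ) :
    ‖u‖ ^ p + ‖v‖ ^ p ≤ (‖u + v‖ ^ p + ‖u - v‖ ^ p) / 2 := by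
  have hp1 : 1 < p := by linarith
  simp only [Lp_norm_rpow hp1]
  rw [← integral_add (Lp_integrable hp1 u) (Lp_integrable hp1 v),
    ← integral_add (Lp_integrable hp1 _) (Lp_integrable hp1 _), ← integral_div]
  refine integral_mono_ae ((Lp_integrable hp1 u).add (Lp_integrable hp1 v))
    (((Lp_integrable hp1 _).add (Lp_integrable hp1 _)).div_const 2) ?_
  filter_upwards [Lp.coeFn_add u v, Lp.coeFn_sub u v] with x h1 h2
  simp only [h1, h2, Pi.add_apply, Pi.sub_apply]
  exact norm_clarkson hp _ _

/-- The Ball–Carlen–Lieb inequality in `L^p`, `1 < p ≤ 2`. -/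
lemma Lp_ball_carlen_lieb (hp1 : 1 < p) (hp2 : p ≤ 2) (u v : Lp ℂ (ENNReal.ofReal p) μ)
    (hu : 0 < ‖u‖) (hv : 0 < ‖v‖) :
    (‖u‖ ^ 2 + (p - 1) * ‖v‖ ^ 2) ^ (p / 2) ≤ (‖u + v‖ ^ p + ‖u - v‖ ^ p) / 2 := by
  set U := ‖u‖ with hU
  set V := ‖v‖ with hV
  have hp0 : 0 < p - 1 := by linarith
  have hS : 0 < U ^ 2 + (p - 1) * V ^ 2 := by positivity
  set S := U ^ 2 + (p - 1) * V ^ 2 with hSdef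
  have hUp : U ^ p = ∫ x, ‖u x‖ ^ p ∂μ := Lp_norm_rpow hp1 u
  have hVp : V ^ p = ∫ x, ‖v x‖ ^ p ∂μ := Lp_norm_rpow hp1 v
  have hUpos := Real.rpow_pos_of_pos hu p
  have hVpos := Real.rpow_pos_of_pos hv p
  -- Jensen with the weights `U² / S` and `(p - 1) V² / S` at the points `a² / U²` and `b² / V²`.
  have hJ : ∀ a b : ℝ, 0 ≤ a → 0 ≤ b →
      S ^ (p / 2) * (U ^ 2 / S * (a ^ p / U ^ p) + (p - 1) * V ^ 2 / S * (b ^ p / V ^ p))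
        ≤ (a ^ 2 + (p - 1) * b ^ 2) ^ (p / 2) := by
    intro a b ha hb
    have hc := (Real.concaveOn_rpow (p := p / 2) (by linarith) (by linarith)).2
      (sq_nonneg (a / U)) (sq_nonneg (b / V)) (show 0 ≤ U ^ 2 / S by positivity)
      (show 0 ≤ (p - 1) * V ^ 2 / S by positivity) (by rw [← add_div]; exact div_self hS.ne')
    simp only [smul_eq_mul] at hc
    rw [sq_rpow_half (by positivity), sq_rpow_half (by positivity), Real.div_rpow ha hu.le,
      Real.div_rpow hb hv.le] at hc
    have e : a ^ 2 + (p - 1) * b ^ 2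
        = S * (U ^ 2 / S * (a / U) ^ 2 + (p - 1) * V ^ 2 / S * (b / V) ^ 2) := by
      field_simp
    rw [e, Real.mul_rpow hS.le (by positivity)]
    gcongr
  have hiu := ((Lp_integrable hp1 u).div_const (U ^ p)).const_mul (U ^ 2 / S)
  have hiv := ((Lp_integrable hp1 v).div_const (V ^ p)).const_mul ((p - 1) * V ^ 2 / S)
  have hint : ∫ x, S ^ (p / 2) * (U ^ 2 / S * (‖u x‖ ^ p / U ^ p)
      + (p - 1) * V ^ 2 / S * (‖v x‖ ^ p / V ^ p)) ∂μ = S ^ (p / 2) := by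
    rw [integral_const_mul, integral_add hiu hiv, integral_const_mul, integral_const_mul,
      integral_div, integral_div, ← hUp, ← hVp, div_self hUpos.ne', div_self hVpos.ne',
      mul_one, mul_one, ← add_div, div_self hS.ne', mul_one]
  rw [← hint, Lp_norm_rpow hp1 (u + v), Lp_norm_rpow hp1 (u - v),
    ← integral_add (Lp_integrable hp1 _) (Lp_integrable hp1 _), ← integral_div]
  refine integral_mono_ae ((hiu.add hiv).const_mul _)
    (((Lp_integrable hp1 _).add (Lp_integrable hp1 _)).div_const 2) ?_
  filter_upwards [Lp.coeFn_add u v, Lp.coeFn_sub u v] with x h1 h2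
  simp only [h1, h2, Pi.add_apply, Pi.sub_apply]
  have h3 := hJ _ _ (norm_nonneg (u x)) (norm_nonneg (v x))
  have h4 := norm_two_point hp1 hp2 (u x) (v x)
  linarith

end Lp

end SharpUniformConvexity

open SharpUniformConvexity

/-- Sharp uniform convexity of `L^p`: if `‖f‖_p = ‖g‖_p = 1` and
`(1/2)‖f + g‖_p > 1 - δ`, then `‖f - g‖_p ≤ √(8/(p-1)) δ^{1/2}` for `1 < p ≤ 2`,
and `‖f - g‖_p ≤ 2 p^{1/p} δ^{1/p}` for `2 ≤ p < ∞`. -/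
theorem sharp_uniform_convexity_Lp
    {X : Type*} [MeasurableSpace X] (μ : Measure X) (p : ℝ) (hp : 1 < p)
    (f g : Lp ℂ (ENNReal.ofReal p) μ) (hf : ‖f‖ = 1) (hg : ‖g‖ = 1)
    (δ : ℝ) (hδ : 0 < δ) (hclose : 1 - δ < (1/2 : ℝ) * ‖f + g‖) :
    (p ≤ 2 → ‖f - g‖ ≤ Real.sqrt (8 / (p - 1)) * δ ^ ((1:ℝ)/2)) ∧
    (2 ≤ p → ‖f - g‖ ≤ 2 * p ^ (1/p) * δ ^ (1/p)) := by
  have : Fact (1 ≤ ENNReal.ofReal p) := ⟨by simpa using hp.le⟩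
  have hp0 : 0 < p - 1 := by linarith
  have htri : ‖f - g‖ ≤ 2 := (norm_sub_le f g).trans (by rw [hf, hg]; norm_num)
  set u : Lp ℂ (ENNReal.ofReal p) μ := (1 / 2 : ℝ) • (f + g) with hu
  set v : Lp ℂ (ENNReal.ofReal p) μ := (1 / 2 : ℝ) • (f - g) with hv
  have hun : ‖u‖ = 1 / 2 * ‖f + g‖ := by rw [hu, norm_smul]; norm_num
  have hvn : ‖v‖ = 1 / 2 * ‖f - g‖ := by rw [hv, norm_smul]; norm_num
  have huv : u + v = f := by rw [hu, hv]; module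
  have huv' : u - v = g := by rw [hu, hv]; module
  rw [← hun] at hclose
  have hfg : ‖f - g‖ = 2 * ‖v‖ := by rw [hvn]; ring
  constructor
  · intro hp2
    rw [← Real.sqrt_eq_rpow, ← Real.sqrt_mul (by positivity)]
    apply Real.le_sqrt_of_sq_le
    rw [div_mul_eq_mul_div, le_div_iff₀ hp0]
    rcases le_or_gt 1 δ with h1 | h1
    · have : ‖f - g‖ ^ 2 ≤ 2 ^ 2 := by gcongr
      nlinarith [sq_nonneg ‖f - g‖]
    · rw [hfg]
      have hupos : 0 < ‖u‖ := by linarith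
      rcases (norm_nonneg v).eq_or_lt with h0 | hvpos
      · rw [← h0]; simp; positivity
      have hb := Lp_ball_carlen_lieb hp hp2 u v hupos hvpos
      rw [huv, huv', hf, hg, Real.one_rpow] at hb
      have hS : ‖u‖ ^ 2 + (p - 1) * ‖v‖ ^ 2 ≤ 1 := by
        rw [← Real.rpow_le_rpow_iff (by positivity) zero_le_one (show 0 < p / 2 by linarith),
          Real.one_rpow]
        linarith
      have hsq : (1 - δ) ^ 2 ≤ ‖u‖ ^ 2 := by gcongr
      nlinarith [sq_nonneg δ]
  · intro hp2
    have hpp : 0 < p := by linarith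
    rw [mul_assoc, ← Real.mul_rpow hpp.le hδ.le]
    rcases le_or_gt 1 δ with h1 | h1
    · have : 1 ≤ (p * δ) ^ (1 / p) := Real.one_le_rpow (by nlinarith) (by positivity)
      linarith
    · rw [hfg, one_div]
      gcongr
      rw [Real.le_rpow_inv_iff_of_pos (norm_nonneg v) (by positivity) hpp]
      have hb := Lp_clarkson hp2 u v
      rw [huv, huv', hf, hg, Real.one_rpow] at hb
      have hB := one_add_mul_self_le_rpow_one_add (s := -δ) (by linarith) hp.le
      have hm : (1 + -δ) ^ p ≤ ‖u‖ ^ p :=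
        Real.rpow_le_rpow (by linarith) (by linarith) hpp.le
      linarith
end

section
/- Let 1 < p < ∞, -1 < α < ∞, let f ∈ A^p_α have Taylor expansion f(z) = Σ_{j≥0} a_j z^j, and for k ≥ 0 let σ_k(z) = Σ_{j=0}^{k} (1 - j/(k+1)) a_j z^j denote the k-th Cesàro mean of the Taylor series of f. Then for every n ≥ 1, ‖(2σ_{2n-1} - σ_{n-1}) - f‖_{p,α} ≤ 4 E_n^{p,α}(f). -/
/-!
Write `V_n = 2 σ_{2n-1} - σ_{n-1}` for the de la Vallée-Poussin mean. Its multipliers are `1` for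
`j ≤ n`, so it reproduces every polynomial `P` of degree at most `n`
(`vallee_poussin_polynomial`), and hence `V_n f - f = V_n (f - P) - (f - P)`. It therefore suffices
that each Cesàro mean is a contraction of the weighted `L^p` norm, for then the right-hand side has
norm at most `(2 + 1 + 1) ‖f - P‖`, and one takes the infimum over `P`.

The contraction (`lintegral_cesaro_le`) holds because `σ_k g (z)` is the average of the rotations
`g (z e^{iθ})` against the Fejér kernel, a probability density (`cesaro_eq_integral`). Jensen's
inequality bounds `|σ_k g (z)|^p` by the average of `|g (z e^{iθ})|^p`; integrating over the disc,
exchanging the integrals and using that `dA_α` is rotation invariant (`lintegral_rotate`) gives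
the claim.

The Bochner integral in `bNorm` is `0` when it diverges, so the argument is carried out with
`eLpNorm` for the measure `dA_α` and transferred at the end; the transfer needs `f - P` to have
finite norm, which holds because `dA_α` is a finite measure when `α > -1` (`integrableOn_wt`).
-/

open MeasureTheory Complex Set Metric

noncomputable section

/-- The open unit disc in `ℂ`. -/
def unitDisc : Set ℂ := Metric.ball 0 1

/-- The density of the weighted measure `dA_α = (α+1) π⁻¹ (1-|z|²)^α dA`
with respect to area measure. -/
def wt (α : ℝ) (z : ℂ) : ℝ := (α + 1) / Real.pi * (1 - ‖z‖ ^ 2) ^ α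

/-- The norm `‖f‖_{p,α}` of the weighted Bergman space `A^p_α`. -/
def bNorm (p α : ℝ) (f : ℂ → ℂ) : ℝ :=
  (∫ z in unitDisc, ‖f z‖ ^ p * wt α z) ^ (1 / p)

/-- Membership in the weighted Bergman space `A^p_α`: analytic on the unit disc
with finite weighted `p`-norm. -/
def MemAp (p α : ℝ) (f : ℂ → ℂ) : Prop :=
  DifferentiableOn ℂ f unitDisc ∧
    IntegrableOn (fun z => ‖f z‖ ^ p * wt α z) unitDisc

/-- `E_n^{p,α}(f)`: the distance from `f` to the polynomials of degree at most `n`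
in the `A^p_α` norm. -/
def polyErr (p α : ℝ) (n : ℕ) (f : ℂ → ℂ) : ℝ :=
  sInf {e | ∃ P : Polynomial ℂ, P.natDegree ≤ n ∧
    e = bNorm p α fun z => f z - P.eval z}

/-! ### Cesàro means and the Fejér kernel -/

/-- The `k`-th Cesàro mean at `z` of the power series with coefficients `b`. -/
def cesaro (b : ℕ → ℂ) (k : ℕ) (z : ℂ) : ℂ :=
  ∑ j ∈ Finset.range (k + 1), (1 - (j : ℂ) / ((k : ℂ) + 1)) * b j * z ^ j

/-- The term of integer index `q` of the power series with coefficients `b`, evaluated at `z`;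
it is zero for negative `q`. -/
def term (b : ℕ → ℂ) (z : ℂ) (q : ℤ) : ℂ :=
  if 0 ≤ q then b q.toNat * z ^ q.toNat else 0

/-- The geometric sum `1 + e^{iθ} + ⋯ + e^{ikθ}`. -/
def geom (k : ℕ) (θ : ℝ) : ℂ := ∑ l ∈ Finset.range (k + 1), exp (l * θ * I)

lemma integral_exp_int (m : ℤ) :
    ∫ θ in (0 : ℝ)..2 * Real.pi, exp (m * θ * I) = if m = 0 then (2 * Real.pi : ℂ) else 0 := by
  split_ifs with h
  · simp [h]
  · have hc : (m * I : ℂ) ≠ 0 := by simp [h]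
    have h1 := integral_exp_mul_complex (a := 0) (b := 2 * Real.pi) hc
    have h2 : exp ((m * I : ℂ) * (2 * Real.pi : ℝ)) = 1 := by
      rw [← exp_int_mul_two_pi_mul_I m]
      push_cast
      ring_nf
    rw [h2] at h1
    simp only [ofReal_zero, mul_zero, exp_zero, sub_self, zero_div] at h1
    rw [← h1]
    congr 1 with θ
    ring_nf

/-- The Fourier coefficients of `θ ↦ g (z e^{iθ})` are the terms of the power series of `g`
at `z`: the series converges absolutely, so it may be integrated termwise. -/
lemma fourier_coeff {g : ℂ → ℂ} {b : ℕ → ℂ}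
    (hb : ∀ z ∈ unitDisc, HasSum (fun j => b j * z ^ j) (g z)) {z : ℂ} (hz : z ∈ unitDisc)
    (q : ℤ) :
    ∫ θ in (0 : ℝ)..2 * Real.pi, g (z * exp (θ * I)) * exp (-(q * θ * I))
      = 2 * Real.pi * term b z q := by
  have hrot : ∀ θ : ℝ, z * exp (θ * I) ∈ unitDisc := fun θ => by
    simpa [unitDisc, norm_exp_ofReal_mul_I] using hz
  have hsum : Summable fun j => ‖b j * z ^ j‖ := (hb z hz).summable.norm
  have key : HasSum
      (fun j : ℕ => ∫ θ in (0 : ℝ)..2 * Real.pi, b j * z ^ j * exp (((j - q : ℤ) : ℂ) * θ * I))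
      (∫ θ in (0 : ℝ)..2 * Real.pi, g (z * exp (θ * I)) * exp (-(q * θ * I))) := by
    refine intervalIntegral.hasSum_integral_of_dominated_convergence
      (fun j _ => ‖b j * z ^ j‖) (fun j => ?_) (fun j => ?_) ?_ ?_ ?_
    · exact (by fun_prop : Continuous _).aestronglyMeasurable
    · refine Filter.Eventually.of_forall fun θ _ => ?_
      have : ‖exp (((j - q : ℤ) : ℂ) * θ * I)‖ = 1 := by
        have := norm_exp_ofReal_mul_I ((j - q : ℤ) * θ)
        push_cast at this ⊢
        exact this
      rw [norm_mul _ (exp _), this, mul_one]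
    · exact Filter.Eventually.of_forall fun θ _ => hsum
    · exact intervalIntegrable_const
    · refine Filter.Eventually.of_forall fun θ _ => ?_
      have h := (hb _ (hrot θ)).mul_right (exp (-(q * θ * I)))
      refine (congrArg (HasSum · _) (funext fun j => ?_)).mpr h
      have e : exp (((j - q : ℤ) : ℂ) * θ * I) = exp (j * (θ * I)) * exp (-(q * θ * I)) := by
        rw [← exp_add]
        push_cast
        ring_nf
      rw [e, mul_pow, ← exp_nat_mul]
      ring
  have hterm : ∀ j : ℕ,
      (∫ θ in (0 : ℝ)..2 * Real.pi, b j * z ^ j * exp (((j - q : ℤ) : ℂ) * θ * I))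
        = if (j : ℤ) = q then 2 * Real.pi * (b j * z ^ j) else 0 := by
    intro j
    rw [intervalIntegral.integral_const_mul, integral_exp_int]
    simp only [sub_eq_zero]
    split_ifs <;> ring
  simp only [hterm] at key
  refine key.unique ?_
  by_cases hq : 0 ≤ q
  · lift q to ℕ using hq
    have := hasSum_ite_eq q (2 * Real.pi * (b q * z ^ q))
    simp only [term, Int.natCast_nonneg, if_true, Int.toNat_natCast, Nat.cast_inj]
    convert this using 1
    ext j
    split_ifs with h
    · rw [h]
    · rfl
  · have : ∀ j : ℕ, (j : ℤ) ≠ q := fun j => by omega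
    simp [term, hq, this, hasSum_zero]

lemma normSq_geom (k : ℕ) (θ : ℝ) :
    ((‖geom k θ‖ ^ 2 : ℝ) : ℂ) = ∑ l ∈ Finset.range (k + 1), ∑ m ∈ Finset.range (k + 1),
      exp (-(((m - l : ℤ) : ℂ) * θ * I)) := by
  push_cast
  rw [← mul_conj', geom, map_sum, Finset.sum_mul_sum]
  refine Finset.sum_congr rfl fun l _ => Finset.sum_congr rfl fun m _ => ?_
  rw [← exp_conj, ← exp_add]
  simp
  ring_nf

/-- Summing the terms over the differences of pairs of indices counts the `j`-th term
`k + 1 - j` times. -/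
lemma sum_sum_term (b : ℕ → ℂ) (z : ℂ) (K : ℕ) :
    ∑ l ∈ Finset.range K, ∑ m ∈ Finset.range K, term b z (m - l : ℤ)
      = ∑ j ∈ Finset.range K, ((K : ℂ) - j) * (b j * z ^ j) := by
  induction K with
  | zero => simp
  | succ K ih =>
    have h1 : ∑ m ∈ Finset.range K, term b z (m - K : ℤ) = 0 := by
      refine Finset.sum_eq_zero fun m hm => ?_
      have := Finset.mem_range.1 hm
      rw [term, if_neg (by omega)]
    have h2 : ∑ l ∈ Finset.range (K + 1), term b z (K - l : ℤ)
        = ∑ j ∈ Finset.range (K + 1), b j * z ^ j := by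
      rw [← Finset.sum_range_reflect]
      refine Finset.sum_congr rfl fun j hj => ?_
      have := Finset.mem_range.1 hj
      have e : ((K : ℤ) - ((K + 1 - 1 - j : ℕ) : ℤ)) = j := by omega
      rw [e]
      simp [term]
    rw [Finset.sum_range_succ, Finset.sum_range_succ _ K, h1, zero_add]
    simp only [Finset.sum_range_succ _ K] at h2 ⊢
    rw [Finset.sum_add_distrib, ih, add_assoc, h2, ← add_assoc, ← Finset.sum_add_distrib]
    push_cast
    congr 1
    · exact Finset.sum_congr rfl fun j _ => by ring
    · ring

lemma sum_sum_term_eq_cesaro (b : ℕ → ℂ) (z : ℂ) (k : ℕ) :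
    ∑ l ∈ Finset.range (k + 1), ∑ m ∈ Finset.range (k + 1), term b z (m - l : ℤ)
      = (k + 1) * cesaro b k z := by
  rw [sum_sum_term, cesaro, Finset.mul_sum]
  refine Finset.sum_congr rfl fun j _ => ?_
  have : (k + 1 : ℂ) ≠ 0 := Nat.cast_add_one_ne_zero k
  push_cast
  field_simp

/-- The Fejér kernel, normalised to have integral one over a period. -/
def fejer (k : ℕ) (θ : ℝ) : ℝ := ‖geom k θ‖ ^ 2 / (2 * Real.pi * (k + 1))

lemma fejer_nonneg (k : ℕ) (θ : ℝ) : 0 ≤ fejer k θ := by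
  have := Real.pi_pos
  unfold fejer
  positivity

lemma continuous_fejer (k : ℕ) : Continuous (fejer k) := by
  unfold fejer geom
  fun_prop

/-- The Cesàro means are averages of rotations against the Fejér kernel. -/
lemma integral_fejer_mul {g : ℂ → ℂ} {b : ℕ → ℂ} (hg : ContinuousOn g unitDisc)
    (hb : ∀ z ∈ unitDisc, HasSum (fun j => b j * z ^ j) (g z)) {z : ℂ} (hz : z ∈ unitDisc)
    (k : ℕ) :
    ∫ θ in (0 : ℝ)..2 * Real.pi, (fejer k θ : ℂ) * g (z * exp (θ * I)) = cesaro b k z := by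
  have hrot : ∀ θ : ℝ, z * exp (θ * I) ∈ unitDisc := fun θ => by
    simpa [unitDisc, norm_exp_ofReal_mul_I] using hz
  have hc : Continuous fun θ : ℝ => g (z * exp (θ * I)) :=
    hg.comp_continuous (by fun_prop) hrot
  have hk : (k + 1 : ℂ) ≠ 0 := Nat.cast_add_one_ne_zero k
  have hpi : (Real.pi : ℂ) ≠ 0 := ofReal_ne_zero.2 Real.pi_ne_zero
  have h1 : ∀ θ : ℝ, (fejer k θ : ℂ) * g (z * exp (θ * I)) = (2 * Real.pi * (k + 1) : ℂ)⁻¹ *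
      ∑ l ∈ Finset.range (k + 1), ∑ m ∈ Finset.range (k + 1),
        g (z * exp (θ * I)) * exp (-(((m - l : ℤ) : ℂ) * θ * I)) := by
    intro θ
    simp only [← Finset.mul_sum]
    rw [← normSq_geom, fejer]
    push_cast
    ring
  simp only [h1]
  rw [intervalIntegral.integral_const_mul, intervalIntegral.integral_finsetSum]
  · have h2 : ∀ l ∈ Finset.range (k + 1), (∫ θ in (0 : ℝ)..2 * Real.pi,
        ∑ m ∈ Finset.range (k + 1), g (z * exp (θ * I)) * exp (-(((m - l : ℤ) : ℂ) * θ * I)))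
        = 2 * Real.pi * ∑ m ∈ Finset.range (k + 1), term b z (m - l : ℤ) := by
      intro l _
      rw [intervalIntegral.integral_finsetSum, Finset.mul_sum]
      · exact Finset.sum_congr rfl fun m _ => fourier_coeff hb hz _
      · intro m _
        exact (hc.mul (by fun_prop)).intervalIntegrable _ _
    rw [Finset.sum_congr rfl h2, ← Finset.mul_sum, sum_sum_term_eq_cesaro]
    field_simp
  · intro l _
    exact (continuous_finsetSum _ fun m _ => hc.mul (by fun_prop)).intervalIntegrable _ _

/-- The Fejér kernel has mass one: it averages the constant function `1` to its own
Cesàro mean. -/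
lemma integral_fejer (k : ℕ) : ∫ θ in (0 : ℝ)..2 * Real.pi, fejer k θ = 1 := by
  have h := integral_fejer_mul (g := fun _ => 1) (b := fun j => if j = 0 then 1 else 0)
    continuousOn_const (fun z _ => by
      convert hasSum_ite_eq 0 (1 : ℂ) using 1
      ext j
      by_cases hj : j = 0 <;> simp [hj]) (z := 0) (by simp [unitDisc]) k
  simp only [mul_one, intervalIntegral.integral_ofReal] at h
  have : cesaro (fun j => if j = 0 then 1 else 0) k 0 = 1 := by
    rw [cesaro, Finset.sum_eq_single 0] <;> simp +contextual
  rw [this] at h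
  exact_mod_cast h

/-! ### The measure `dA_α` and its rotation invariance -/

/-- The measure `dA_α` on the disc, as a measure on `ℂ`. -/
def discMeasure (α : ℝ) : Measure ℂ :=
  (volume.restrict unitDisc).withDensity fun z => ENNReal.ofReal (wt α z)

/-- The probability measure on a period whose density is the Fejér kernel. -/
def fejerMeasure (k : ℕ) : Measure ℝ :=
  (volume.restrict (Ioc 0 (2 * Real.pi))).withDensity fun θ => ENNReal.ofReal (fejer k θ)

instance (α : ℝ) : SFinite (discMeasure α) := by
  unfold discMeasure
  infer_instance

instance (k : ℕ) : IsProbabilityMeasure (fejerMeasure k) := by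
  refine ⟨?_⟩
  rw [fejerMeasure, withDensity_apply _ MeasurableSet.univ, Measure.restrict_univ,
    ← ofReal_integral_eq_lintegral_ofReal, ← intervalIntegral.integral_of_le (by positivity),
    integral_fejer, ENNReal.ofReal_one]
  · exact (continuous_fejer k).integrableOn_Ioc
  · exact Filter.Eventually.of_forall (fejer_nonneg k)

lemma measurableSet_unitDisc : MeasurableSet unitDisc := measurableSet_ball

lemma measurable_wt (α : ℝ) : Measurable (wt α) := by
  unfold wt
  fun_prop

lemma ae_mem_unitDisc (α : ℝ) : ∀ᵐ z ∂discMeasure α, z ∈ unitDisc :=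
  (withDensity_absolutelyContinuous _ _).ae_le (ae_restrict_mem measurableSet_unitDisc)

lemma wt_nonneg {α : ℝ} (hα : -1 < α) {z : ℂ} (hz : z ∈ unitDisc) : 0 ≤ wt α z := by
  have h1 : ‖z‖ < 1 := by simpa [unitDisc] using hz
  have h2 : 0 ≤ 1 - ‖z‖ ^ 2 := by nlinarith [norm_nonneg z]
  have := Real.pi_pos
  have : 0 ≤ α + 1 := by linarith
  unfold wt
  positivity

lemma lintegral_discMeasure (α : ℝ) (Φ : ℂ → ENNReal) :
    ∫⁻ z, Φ z ∂discMeasure α = ∫⁻ z in unitDisc, ENNReal.ofReal (wt α z) * Φ z :=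
  lintegral_withDensity_eq_lintegral_mul_non_measurable _ (measurable_wt α).ennreal_ofReal
    (Filter.Eventually.of_forall fun _ => ENNReal.ofReal_lt_top) Φ

lemma lintegral_rotate (α θ : ℝ) (Φ : ℂ → ENNReal) :
    ∫⁻ z, Φ (z * exp (θ * I)) ∂discMeasure α = ∫⁻ z, Φ z ∂discMeasure α := by
  have hmp := (rotation (Circle.exp θ)).measurePreserving
  have hemb := (rotation (Circle.exp θ)).toHomeomorph.measurableEmbedding
  have hr : ∀ z, rotation (Circle.exp θ) z = z * exp (θ * I) := fun z => by
    simp [mul_comm]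
  rw [lintegral_discMeasure, lintegral_discMeasure, ← lintegral_indicator measurableSet_unitDisc,
    ← lintegral_indicator measurableSet_unitDisc, ← hmp.lintegral_comp_emb hemb
      (unitDisc.indicator fun z => ENNReal.ofReal (wt α z) * Φ z)]
  congr 1 with z
  have hn : ‖z * exp (θ * I)‖ = ‖z‖ := by simp [norm_exp_ofReal_mul_I]
  rw [hr]
  simp only [indicator, unitDisc, mem_ball_zero_iff, hn, wt]

/-! ### Cesàro means are contractions -/

lemma cesaro_eq_integral {g : ℂ → ℂ} {b : ℕ → ℂ} (hg : ContinuousOn g unitDisc)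
    (hb : ∀ z ∈ unitDisc, HasSum (fun j => b j * z ^ j) (g z)) {z : ℂ} (hz : z ∈ unitDisc)
    (k : ℕ) :
    cesaro b k z = ∫ θ : ℝ, g (z * exp (θ * I)) ∂fejerMeasure k := by
  rw [← integral_fejer_mul hg hb hz, intervalIntegral.integral_of_le (by positivity),
    fejerMeasure, integral_withDensity_eq_integral_toReal_smul
      (continuous_fejer k).measurable.ennreal_ofReal
      (Filter.Eventually.of_forall fun _ => ENNReal.ofReal_lt_top)]
  congr 1 with θ
  rw [ENNReal.toReal_ofReal (fejer_nonneg k θ), real_smul]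

/-- Jensen's inequality for the Fejér average, followed by integration over the disc and
rotation invariance of `dA_α`. -/
lemma lintegral_cesaro_le {p : ℝ} (hp : 1 ≤ p) (α : ℝ) {g : ℂ → ℂ} {b : ℕ → ℂ}
    (hg : ContinuousOn g unitDisc)
    (hb : ∀ z ∈ unitDisc, HasSum (fun j => b j * z ^ j) (g z)) (k : ℕ) :
    ∫⁻ z, ‖cesaro b k z‖ₑ ^ p ∂discMeasure α ≤ ∫⁻ z, ‖g z‖ₑ ^ p ∂discMeasure α := by
  classical
  have hp0 : 0 < p := by linarith
  -- Values of `g` off the disc are irrelevant; replacing them by `0` gives joint measurability.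
  wlog hgm : Measurable g generalizing g
  · have heq : EqOn (unitDisc.piecewise g 0) g unitDisc := piecewise_eqOn _ _ _
    refine (this (g := unitDisc.piecewise g 0) (hg.congr heq)
      (fun z hz => by rw [heq hz]; exact hb z hz)
      (hg.measurable_piecewise continuousOn_const measurableSet_unitDisc)).trans_eq ?_
    refine lintegral_congr_ae ((ae_mem_unitDisc α).mono fun z hz => ?_)
    simp only [heq hz]
  have hm : Measurable fun x : ℂ × ℝ => g (x.1 * exp (x.2 * I)) := by fun_prop
  have hpt : ∀ z ∈ unitDisc,
      ‖cesaro b k z‖ₑ ^ p ≤ ∫⁻ θ : ℝ, ‖g (z * exp (θ * I))‖ₑ ^ p ∂fejerMeasure k := by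
    intro z hz
    have hmz : Measurable fun θ : ℝ => g (z * exp (θ * I)) := by fun_prop
    have h1 := eLpNorm'_le_eLpNorm'_of_exponent_le one_pos hp (fejerMeasure k)
      hmz.aestronglyMeasurable
    simp only [eLpNorm', ENNReal.rpow_one, div_one] at h1
    have h2 : ‖cesaro b k z‖ₑ ≤ ∫⁻ θ : ℝ, ‖g (z * exp (θ * I))‖ₑ ∂fejerMeasure k := by
      rw [cesaro_eq_integral hg hb hz]
      exact enorm_integral_le_lintegral_enorm _
    rw [← ENNReal.le_rpow_inv_iff hp0, ← one_div]
    exact h2.trans h1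
  calc ∫⁻ z, ‖cesaro b k z‖ₑ ^ p ∂discMeasure α
      ≤ ∫⁻ z, ∫⁻ θ : ℝ, ‖g (z * exp (θ * I))‖ₑ ^ p ∂fejerMeasure k ∂discMeasure α :=
        lintegral_mono_ae ((ae_mem_unitDisc α).mono hpt)
    _ = ∫⁻ θ : ℝ, ∫⁻ z, ‖g (z * exp (θ * I))‖ₑ ^ p ∂discMeasure α ∂fejerMeasure k :=
        lintegral_lintegral_swap (hm.enorm.pow_const p).aemeasurable
    _ = ∫⁻ z, ‖g z‖ₑ ^ p ∂discMeasure α := by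
        simp only [lintegral_rotate α _ fun z => ‖g z‖ₑ ^ p, lintegral_const, measure_univ,
          mul_one]

lemma eLpNorm_cesaro_le {p : ℝ} (hp : 1 ≤ p) (α : ℝ) {g : ℂ → ℂ} {b : ℕ → ℂ}
    (hg : ContinuousOn g unitDisc)
    (hb : ∀ z ∈ unitDisc, HasSum (fun j => b j * z ^ j) (g z)) (k : ℕ) :
    eLpNorm (cesaro b k) (ENNReal.ofReal p) (discMeasure α)
      ≤ eLpNorm g (ENNReal.ofReal p) (discMeasure α) := by
  have hp0 : 0 < p := by linarith
  rw [eLpNorm_eq_eLpNorm' (by simpa using hp0) ENNReal.ofReal_ne_top,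
    eLpNorm_eq_eLpNorm' (by simpa using hp0) ENNReal.ofReal_ne_top,
    ENNReal.toReal_ofReal hp0.le, eLpNorm', eLpNorm']
  refine ENNReal.rpow_le_rpow ?_ (by positivity)
  exact lintegral_cesaro_le hp α hg hb k

/-! ### The weighted norm as an `L^p` norm -/

lemma aestronglyMeasurable_of_continuousOn {g : ℂ → ℂ} (α : ℝ) (hg : ContinuousOn g unitDisc) :
    AEStronglyMeasurable g (discMeasure α) :=
  (hg.aestronglyMeasurable measurableSet_unitDisc).mono_ac (withDensity_absolutelyContinuous _ _)

lemma ofReal_mul_eq {p α : ℝ} (hp : 0 ≤ p) (g : ℂ → ℂ) (z : ℂ) :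
    ENNReal.ofReal (‖g z‖ ^ p * wt α z) = ENNReal.ofReal (wt α z) * ‖g z‖ₑ ^ p := by
  rw [ENNReal.ofReal_mul (by positivity), mul_comm,
    ← ENNReal.ofReal_rpow_of_nonneg (norm_nonneg _) hp, ofReal_norm]

/-- Both sides are zero when the integral diverges. -/
lemma bNorm_eq_toReal {p α : ℝ} (hp : 1 < p) (hα : -1 < α) {g : ℂ → ℂ}
    (hg : ContinuousOn g unitDisc) :
    bNorm p α g = (eLpNorm g (ENNReal.ofReal p) (discMeasure α)).toReal := by
  have hp0 : 0 < p := by linarith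
  rw [eLpNorm_eq_eLpNorm' (by simpa using hp0) ENNReal.ofReal_ne_top,
    ENNReal.toReal_ofReal hp0.le, eLpNorm', ← ENNReal.toReal_rpow, lintegral_discMeasure, bNorm,
    integral_eq_lintegral_of_nonneg_ae]
  · simp only [ofReal_mul_eq hp0.le]
  · refine (ae_restrict_mem measurableSet_unitDisc).mono fun z hz => ?_
    exact mul_nonneg (by positivity) (wt_nonneg hα hz)
  · refine AEStronglyMeasurable.mul ?_ (measurable_wt α).aestronglyMeasurable
    exact ((hg.norm.rpow_const fun _ _ => Or.inr hp0.le).aestronglyMeasurable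
      measurableSet_unitDisc)

/-- In polar coordinates the density is `r (1 - r²)^α`, the derivative of
`-(1 - r²)^(α+1) / (2 (α+1))`, which is continuous up to `r = 1` because `α > -1`. -/
lemma integrableOn_wt {α : ℝ} (hα : -1 < α) : IntegrableOn (wt α) unitDisc := by
  have h0 : (0 : ℝ) < α + 1 := by linarith
  have h1 : IntegrableOn (fun r : ℝ => r * (1 - r ^ 2) ^ α) (Ioc 0 1) := by
    refine intervalIntegral.integrableOn_deriv_of_nonneg
      (g := fun r : ℝ => -((1 - r ^ 2) ^ (α + 1) / (2 * (α + 1)))) ?_ ?_ ?_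
    · exact (ContinuousOn.div_const (ContinuousOn.rpow_const (by fun_prop)
        fun _ _ => Or.inr h0.le) _).neg
    · intro r hr
      have hr2 : 0 < 1 - r ^ 2 := by nlinarith [hr.1, hr.2]
      have hd : HasDerivAt (fun r : ℝ => 1 - r ^ 2) (-(2 * r)) r := by
        simpa using (hasDerivAt_pow 2 r).const_sub 1
      have := ((hd.rpow_const (p := α + 1) (Or.inl hr2.ne')).div_const (2 * (α + 1))).neg
      refine (congrArg (HasDerivAt _ · r) ?_).mpr this
      rw [add_sub_cancel_right]
      field_simp
    · intro r hr
      have hr2 : 0 < 1 - r ^ 2 := by nlinarith [hr.1, hr.2]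
      exact mul_nonneg hr.1.le (Real.rpow_nonneg hr2.le _)
  have h2 := (integrableOn_fun_norm_addHaar (E := ℂ) (F := ℝ) volume
    (f := fun r => (α + 1) / Real.pi * (1 - r ^ 2) ^ α) (r := 1)).2
  refine h2 ?_
  refine ((h1.mono_set Ioo_subset_Ioc_self).const_mul ((α + 1) / Real.pi)).congr ?_
  refine Filter.Eventually.of_forall fun r => ?_
  simp only [finrank_real_complex, smul_eq_mul]
  norm_num
  ring

lemma isFiniteMeasure_discMeasure {α : ℝ} (hα : -1 < α) : IsFiniteMeasure (discMeasure α) :=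
  isFiniteMeasure_withDensity_ofReal (integrableOn_wt hα).2

/-! ### De la Vallée-Poussin means -/

lemma cesaro_pred {N : ℕ} (hN : 1 ≤ N) (b : ℕ → ℂ) (z : ℂ) :
    cesaro b (N - 1) z = ∑ j ∈ Finset.range N, (1 - (j : ℂ) / N) * b j * z ^ j := by
  obtain ⟨M, rfl⟩ : ∃ M, N = M + 1 := ⟨N - 1, by omega⟩
  simp [cesaro]

lemma cesaro_sub (b c : ℕ → ℂ) (k : ℕ) (z : ℂ) :
    cesaro (fun j => b j - c j) k z = cesaro b k z - cesaro c k z := by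
  rw [cesaro, cesaro, cesaro, ← Finset.sum_sub_distrib]
  exact Finset.sum_congr rfl fun j _ => by ring

/-- The de la Vallée-Poussin mean reproduces polynomials of degree at most `n`: the multipliers
`2 (1 - j / (2n)) - (1 - j / n)` are `1` for `j < n`, and `2 (1 - j / (2n))` is `1` at `j = n`. -/
lemma vallee_poussin_polynomial {n : ℕ} (hn : 1 ≤ n) {P : Polynomial ℂ} (hP : P.natDegree ≤ n)
    (z : ℂ) :
    2 * cesaro P.coeff (2 * n - 1) z - cesaro P.coeff (n - 1) z = P.eval z := by
  have hn0 : (n : ℂ) ≠ 0 := Nat.cast_ne_zero.2 (by omega)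
  have h2 : ∑ j ∈ Finset.range n, (1 - (j : ℂ) / n) * P.coeff j * z ^ j
      = ∑ j ∈ Finset.range (2 * n),
        if j < n then (1 - (j : ℂ) / n) * P.coeff j * z ^ j else 0 := by
    rw [← Finset.sum_filter]
    congr 1
    ext j
    simp only [Finset.mem_range, Finset.mem_filter]
    omega
  rw [cesaro_pred (by omega), cesaro_pred hn, h2,
    Polynomial.eval_eq_sum_range' (by omega : P.natDegree < 2 * n), Finset.mul_sum,
    ← Finset.sum_sub_distrib]
  refine Finset.sum_congr rfl fun j _ => ?_
  push_cast
  rcases lt_trichotomy j n with h | h | h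
  · rw [if_pos h]
    field_simp
    ring
  · subst h
    rw [if_neg (lt_irrefl _)]
    field_simp
    ring
  · rw [if_neg (by omega), Polynomial.coeff_eq_zero_of_natDegree_lt (by omega)]
    ring

lemma hasSum_polynomial (P : Polynomial ℂ) (z : ℂ) :
    HasSum (fun j => P.coeff j * z ^ j) (P.eval z) := by
  rw [Polynomial.eval_eq_sum_range]
  refine hasSum_sum_of_ne_finset_zero fun j hj => ?_
  rw [Polynomial.coeff_eq_zero_of_natDegree_lt (by simpa using hj), zero_mul]

lemma MemAp.memLp {p α : ℝ} (hp : 1 < p) {f : ℂ → ℂ} (hf : MemAp p α f) :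
    MemLp f (ENNReal.ofReal p) (discMeasure α) := by
  have hp0 : 0 < p := by linarith
  refine ⟨aestronglyMeasurable_of_continuousOn α hf.1.continuousOn, ?_⟩
  rw [eLpNorm_lt_top_iff_lintegral_rpow_enorm_lt_top (by simpa using hp0) ENNReal.ofReal_ne_top,
    ENNReal.toReal_ofReal hp0.le, lintegral_discMeasure]
  simp only [← ofReal_mul_eq hp0.le]
  exact hf.2.lintegral_lt_top

lemma memLp_polynomial {p α : ℝ} (hα : -1 < α) (P : Polynomial ℂ) :
    MemLp (fun z => P.eval z) (ENNReal.ofReal p) (discMeasure α) := by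
  have := isFiniteMeasure_discMeasure hα
  obtain ⟨C, hC⟩ := (isCompact_closedBall (0 : ℂ) 1).exists_bound_of_continuousOn
    (f := fun z => P.eval z) P.continuous.continuousOn
  exact MemLp.of_bound P.continuous.aestronglyMeasurable C
    ((ae_mem_unitDisc α).mono fun z hz => hC z (ball_subset_closedBall hz))

/-- The operator `g ↦ 2 σ_k g - σ_l g - g` has norm at most `2 + 1 + 1`. -/
lemma eLpNorm_vallee_poussin_sub_le {p : ℝ} (hp : 1 ≤ p) (α : ℝ) {g : ℂ → ℂ} {b : ℕ → ℂ}
    (hg : ContinuousOn g unitDisc)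
    (hb : ∀ z ∈ unitDisc, HasSum (fun j => b j * z ^ j) (g z)) (k l : ℕ) :
    eLpNorm (fun z => (2 * cesaro b k z - cesaro b l z) - g z) (ENNReal.ofReal p) (discMeasure α)
      ≤ 4 * eLpNorm g (ENNReal.ofReal p) (discMeasure α) := by
  have hp' : 1 ≤ ENNReal.ofReal p := by simpa using hp
  have hc : ∀ m, AEStronglyMeasurable (cesaro b m) (discMeasure α) := fun m => by
    have : Continuous (cesaro b m) := by
      unfold cesaro
      fun_prop
    exact this.aestronglyMeasurable
  have hgm := aestronglyMeasurable_of_continuousOn α hg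
  have h2 : AEStronglyMeasurable ((2 : ℂ) • cesaro b k) (discMeasure α) := (hc k).const_smul 2
  have e : (fun z => (2 * cesaro b k z - cesaro b l z) - g z)
      = ((2 : ℂ) • cesaro b k - cesaro b l) - g := by
    ext z
    simp
  have h2e : ‖(2 : ℂ)‖ₑ = 2 := by
    rw [← ofReal_norm]
    simp
  calc _ ≤ eLpNorm ((2 : ℂ) • cesaro b k) (ENNReal.ofReal p) (discMeasure α)
        + eLpNorm (cesaro b l) (ENNReal.ofReal p) (discMeasure α)
        + eLpNorm g (ENNReal.ofReal p) (discMeasure α) := by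
        rw [e]
        exact (eLpNorm_sub_le (h2.sub (hc l)) hgm hp').trans
          (add_le_add_left (eLpNorm_sub_le h2 (hc l) hp') _)
    _ ≤ 2 * eLpNorm g (ENNReal.ofReal p) (discMeasure α)
        + eLpNorm g (ENNReal.ofReal p) (discMeasure α)
        + eLpNorm g (ENNReal.ofReal p) (discMeasure α) := by
        rw [eLpNorm_const_smul, h2e]
        gcongr <;> exact eLpNorm_cesaro_le hp α hg hb _
    _ = 4 * eLpNorm g (ENNReal.ofReal p) (discMeasure α) := by ring

/-- If `σ_k` denotes the `k`-th Cesàro mean of the Taylor series of `f ∈ A^p_α`,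
then `‖(2σ_{2n-1} - σ_{n-1}) - f‖_{p,α} ≤ 4 E_n^{p,α}(f)` for every `n ≥ 1`. -/
theorem cesaro_de_la_vallee_poussin_bound
    (p α : ℝ) (hp : 1 < p) (hα : -1 < α)
    (f : ℂ → ℂ) (hf : MemAp p α f)
    (a : ℕ → ℂ) (ha : ∀ z ∈ unitDisc, HasSum (fun j => a j * z ^ j) (f z))
    (σ : ℕ → ℂ → ℂ)
    (hσ : ∀ k z, σ k z =
      ∑ j ∈ Finset.range (k + 1), (1 - (j : ℂ) / ((k : ℂ) + 1)) * a j * z ^ j)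
    (n : ℕ) (hn : 1 ≤ n) :
    bNorm p α (fun z => (2 * σ (2*n - 1) z - σ (n - 1) z) - f z)
      ≤ 4 * polyErr p α n f := by
  have hσc : ∀ k z, σ k z = cesaro a k z := hσ
  have hfc : ContinuousOn f unitDisc := hf.1.continuousOn
  have hcont : ∀ k, Continuous (cesaro a k) := fun k => by
    unfold cesaro
    fun_prop
  suffices h : bNorm p α (fun z => (2 * σ (2*n - 1) z - σ (n - 1) z) - f z) / 4
      ≤ polyErr p α n f by linarith
  refine le_csInf ⟨_, 0, by simp, rfl⟩ ?_
  rintro e ⟨P, hP, rfl⟩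
  have hg : ContinuousOn (fun z => f z - P.eval z) unitDisc := hfc.sub P.continuous.continuousOn
  have hb : ∀ z ∈ unitDisc, HasSum (fun j => (a j - P.coeff j) * z ^ j) (f z - P.eval z) := by
    intro z hz
    simpa only [sub_mul] using (ha z hz).sub (hasSum_polynomial P z)
  -- Subtracting `P` changes nothing, since the de la Vallée-Poussin mean reproduces `P`.
  have heq : (fun z => (2 * σ (2*n - 1) z - σ (n - 1) z) - f z)
      = fun z => (2 * cesaro (fun j => a j - P.coeff j) (2 * n - 1) z
        - cesaro (fun j => a j - P.coeff j) (n - 1) z) - (f z - P.eval z) := by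
    ext z
    rw [hσc, hσc, cesaro_sub, cesaro_sub, ← vallee_poussin_polynomial hn hP z]
    ring
  have hcont' : ContinuousOn (fun z => (2 * σ (2*n - 1) z - σ (n - 1) z) - f z) unitDisc := by
    simp only [hσc]
    exact (((hcont _).const_mul 2).sub (hcont _)).continuousOn.sub hfc
  have hfin : eLpNorm (fun z => f z - P.eval z) (ENNReal.ofReal p) (discMeasure α) ≠ ⊤ :=
    ((hf.memLp hp).sub (memLp_polynomial hα P)).eLpNorm_ne_top
  have hle := eLpNorm_vallee_poussin_sub_le hp.le α hg hb (2 * n - 1) (n - 1)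
  rw [← heq] at hle
  have := ENNReal.toReal_mono (ENNReal.mul_ne_top (by simp) hfin) hle
  rw [ENNReal.toReal_mul, ← bNorm_eq_toReal hp hα hg, ← bNorm_eq_toReal hp hα hcont'] at this
  norm_num at this
  linarith
end
end

section
/- Let 1 < p < ∞, -1 < α < ∞, and let K ≥ 0 be an integer. Suppose f ∈ A^p_α is such that its K-th angular derivative D_θ^K f satisfies ‖D_θ^K f‖_{p,α} ≤ M. Define h(t) = (cos t - cos 2t)/2, H_0(t) = h(t)/t², H_k(t) = ∫_t^∞ H_{k-1}(x) dx for k ≥ 1, and C_k = (4/π) ∫_0^∞ |H_k(t)| dt. Then for every n ≥ 1, E_n^{p,α}(f) ≤ 2^K C_K M n^{-K}. -/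
/-!
Write `m = n / 2`. The kernel `(2/π) h(t)/t²` is of de la Vallée-Poussin type: its Fourier transform
is the trapezoid equal to `1` on `[-1, 1]` and to `0` off `[-2, 2]` (`ftT_zero`, from
`∫₀^∞ (1 - cos at)/t² dt = π|a|/2`). Integrating by parts `K` times moves `K` derivatives onto `f` and
replaces `H_0` by `H_K`; at the level of Fourier transforms, where this is carried out here, with
`T_K(x) = ∫₀^∞ (e^{ixt} + (-1)^K e^{-ixt}) H_K(t) dt` it reads `ix T_{K+1}(x) = T_K(x) - T_K(0)`
(`mul_ftT_succ`). As `T_0` is constant near `0`, all `T_K` with `K ≥ 1` vanish near `0`, so that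
`(ix)^K T_K(x) = T_0(x) - T_0(0) = -π/2` for `x ≥ 2` and `K ≥ 1` (`pow_mul_ftT`).

Put `g = D_θ^K f`, with Taylor coefficients `(ij)^K a_j`. The last identity says that
`-(2/π) m^{-K} ∫₀^∞ (g(e^{it/m} z) + (-1)^K g(e^{-it/m} z)) H_K(t) dt` has the same Taylor coefficients
as `f` from index `n` on; hence it equals `f - P` for a polynomial `P` of degree at most `n`
(`exists_polynomial_eq_average`). Minkowski's integral inequality and the rotation invariance of
`dA_α` (`bPow_rotation_average_le`) bound the norm of this average by
`(2/π) m^{-K} · 2 ∫₀^∞ |H_K| · ‖g‖ = 2^K C_K n^{-K} ‖g‖`. For `K = 0` the polynomial `0` suffices,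
since `C_0 ≥ 1`.

All integrals converge absolutely because `|H_k(t)| ≤ t⁻²` (`abs_Hf_le`). This follows from
`e^{iℓt}/t² = ∫₀^∞ s e^{(iℓ-s)t} ds`, in which each tail integration only divides the integrand by
`s - iℓ`.
-/

open MeasureTheory Complex Set Metric

noncomputable section

/-- The functions `H_k`: `H_0(t) = h(t)/t²` with `h(t) = (cos t - cos 2t)/2`, and
`H_k(t) = ∫_t^∞ H_{k-1}(x) dx`. -/
def Hf : ℕ → ℝ → ℝ
  | 0, t => ((Real.cos t - Real.cos (2*t)) / 2) / t ^ 2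
  | (k+1), t => ∫ x in Set.Ioi t, Hf k x

/-- The constants `C_k = (4/π) ∫_0^∞ |H_k(t)| dt`. -/
def Cc (k : ℕ) : ℝ := 4 / Real.pi * ∫ t in Set.Ioi (0:ℝ), |Hf k t|

/-- The angular derivative `D_θ f (z) = i z f'(z)`. -/
def Dth (f : ℂ → ℂ) : ℂ → ℂ := fun z => Complex.I * z * deriv f z

/-! ### The Fourier transform of `h(t)/t²` -/

lemma integral_id_mul_exp_neg {t : ℝ} (ht : 0 < t) :
    ∫ s in Ioi (0:ℝ), s * Real.exp (-(s * t)) = 1 / t ^ 2 := by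
  have h := Real.integral_rpow_mul_exp_neg_mul_Ioi (a := 2) (r := t) (by norm_num) ht
  have e : (2:ℝ) - 1 = 1 := by norm_num
  rw [e] at h
  simp only [Real.rpow_one] at h
  rw [show Real.Gamma 2 = 1 by simp] at h
  simp only [mul_comm t] at h
  rw [h]
  norm_num

lemma integrableOn_id_mul_exp_neg {t : ℝ} (ht : 0 < t) :
    IntegrableOn (fun s : ℝ => s * Real.exp (-(s * t))) (Ioi 0) := by
  apply Integrable.of_integral_ne_zero
  rw [integral_id_mul_exp_neg ht]
  positivity

lemma integral_laplace_one_sub_cos (a : ℝ) {s : ℝ} (hs : 0 < s) :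
    IntegrableOn (fun t : ℝ => s * Real.exp (-(s * t)) * (1 - Real.cos (a * t))) (Ioi 0) ∧
    ∫ t in Ioi (0:ℝ), s * Real.exp (-(s * t)) * (1 - Real.cos (a * t)) = a ^ 2 / (s ^ 2 + a ^ 2) := by
  have key : ∀ b : ℝ, IntegrableOn (fun t : ℝ => Real.exp (-(s * t)) * Real.cos (b * t)) (Ioi 0) ∧
      ∫ t in Ioi (0:ℝ), Real.exp (-(s * t)) * Real.cos (b * t) = s / (s ^ 2 + b ^ 2) := by
    intro b
    have hre : (-(s:ℂ) + b * I).re < 0 := by simpa using hs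
    have h1 := integrableOn_exp_mul_complex_Ioi hre 0
    have h2 := integral_exp_mul_complex_Ioi hre 0
    have e : ∀ t : ℝ, (Complex.exp ((-(s:ℂ) + b * I) * t)).re
        = Real.exp (-(s * t)) * Real.cos (b * t) := by
      intro t
      rw [Complex.exp_re]
      simp
    refine ⟨?_, ?_⟩
    · have := h1.re
      exact this.congr (Filter.Eventually.of_forall fun t => e t)
    · have h3 := integral_re (𝕜 := ℂ) h1
      rw [h2] at h3
      refine Eq.trans (integral_congr_ae (Filter.Eventually.of_forall fun t => (e t).symm)) ?_
      refine h3.trans ?_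
      simp [Complex.div_re, Complex.normSq_apply]
      ring
  obtain ⟨i0, v0⟩ := key 0
  obtain ⟨ia, va⟩ := key a
  simp only [zero_mul, Real.cos_zero, mul_one] at i0 v0
  have e : (fun t : ℝ => s * Real.exp (-(s * t)) * (1 - Real.cos (a * t))) =
      fun t => s * (Real.exp (-(s * t)) - Real.exp (-(s * t)) * Real.cos (a * t)) := by
    funext t; ring
  rw [e]
  refine ⟨(i0.sub ia).const_mul s, ?_⟩
  rw [integral_const_mul, integral_sub i0 ia, v0, va]
  have : s ^ 2 + a ^ 2 ≠ 0 := by positivity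
  field_simp
  ring

lemma integral_cauchy_density (a : ℝ) :
    IntegrableOn (fun s : ℝ => a ^ 2 / (s ^ 2 + a ^ 2)) (Ioi 0) ∧
    ∫ s in Ioi (0:ℝ), a ^ 2 / (s ^ 2 + a ^ 2) = Real.pi / 2 * |a| := by
  rcases eq_or_ne a 0 with rfl | ha
  · simp
  have e : (fun s : ℝ => a ^ 2 / (s ^ 2 + a ^ 2)) = fun s => (1 + (|a|⁻¹ * s) ^ 2)⁻¹ := by
    funext s
    have : s ^ 2 + a ^ 2 ≠ 0 := by positivity
    rw [mul_pow, inv_pow, sq_abs]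
    field_simp
    ring
  rw [e]
  have hpos : 0 < |a|⁻¹ := by positivity
  constructor
  · exact (integrable_inv_one_add_sq.comp_mul_left' hpos.ne').integrableOn
  · rw [integral_comp_mul_left_Ioi (fun s : ℝ => (1 + s ^ 2)⁻¹) 0 hpos]
    simp
    ring

/-- The double integral of `s e^{-st} (1 - cos (a t))`, taken in both orders:
`1 / t² = ∫₀^∞ s e^{-st} ds` on one side, the Laplace transform of `1 - cos` on the other. -/
lemma integral_one_sub_cos_div_sq (a : ℝ) :
    IntegrableOn (fun t : ℝ => (1 - Real.cos (a * t)) / t ^ 2) (Ioi 0) ∧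
    ∫ t in Ioi (0:ℝ), (1 - Real.cos (a * t)) / t ^ 2 = Real.pi / 2 * |a| := by
  obtain ⟨ci, cv⟩ := integral_cauchy_density a
  have hint : Integrable (Function.uncurry fun (t s : ℝ) =>
      s * Real.exp (-(s * t)) * (1 - Real.cos (a * t)))
      ((volume.restrict (Ioi 0)).prod (volume.restrict (Ioi 0))) := by
    rw [integrable_prod_iff']
    · constructor
      · filter_upwards [ae_restrict_mem measurableSet_Ioi] with s hs
        exact (integral_laplace_one_sub_cos a hs).1
      · refine ci.congr ?_
        filter_upwards [ae_restrict_mem measurableSet_Ioi] with s hs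
        rw [← (integral_laplace_one_sub_cos a hs).2]
        refine integral_congr_ae (Filter.Eventually.of_forall fun t => ?_)
        have : 0 ≤ 1 - Real.cos (a * t) := by linarith [Real.cos_le_one (a * t)]
        have hs' : (0:ℝ) < s := hs
        simp only [Function.uncurry]
        rw [Real.norm_of_nonneg (by positivity)]
    · exact Continuous.aestronglyMeasurable (by simp only [Function.uncurry_def]; fun_prop)
  have inner : ∀ t ∈ Ioi (0:ℝ), ∫ s in Ioi (0:ℝ), s * Real.exp (-(s * t)) * (1 - Real.cos (a * t))
      = (1 - Real.cos (a * t)) / t ^ 2 := by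
    intro t ht
    rw [integral_mul_const, integral_id_mul_exp_neg ht]
    ring
  constructor
  · refine IntegrableOn.congr_fun (hint.integral_prod_left) (fun t ht => inner t ht) measurableSet_Ioi
  · rw [← cv, ← setIntegral_congr_fun measurableSet_Ioi inner, integral_integral_swap hint]
    exact setIntegral_congr_fun measurableSet_Ioi
      fun s hs => (integral_laplace_one_sub_cos a hs).2

lemma integral_cos_mul_Hf_zero (x : ℝ) :
    IntegrableOn (fun t => Real.cos (x * t) * Hf 0 t) (Ioi 0) ∧
    ∫ t in Ioi (0:ℝ), Real.cos (x * t) * Hf 0 t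
      = Real.pi / 8 * (|2 + x| + |2 - x| - |1 + x| - |1 - x|) := by
  have e : (fun t => Real.cos (x * t) * Hf 0 t) = fun t =>
      (1/4:ℝ) * ((1 - Real.cos ((2 + x) * t)) / t ^ 2 + (1 - Real.cos ((2 - x) * t)) / t ^ 2
       - (1 - Real.cos ((1 + x) * t)) / t ^ 2 - (1 - Real.cos ((1 - x) * t)) / t ^ 2) := by
    funext t
    simp only [Hf, add_mul, sub_mul, one_mul, Real.cos_add, Real.cos_sub]
    ring
  rw [e]
  have h := integral_one_sub_cos_div_sq
  refine ⟨((((h _).1.add (h _).1).sub (h _).1).sub (h _).1).const_mul _, ?_⟩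
  have comb : ∀ {A B C D : ℝ → ℝ}, IntegrableOn A (Ioi 0) → IntegrableOn B (Ioi 0) →
      IntegrableOn C (Ioi 0) → IntegrableOn D (Ioi 0) →
      ∫ t in Ioi (0:ℝ), (A t + B t - C t - D t) = (∫ t in Ioi (0:ℝ), A t) +
        (∫ t in Ioi (0:ℝ), B t) - (∫ t in Ioi (0:ℝ), C t) - ∫ t in Ioi (0:ℝ), D t := by
    intro A B C D hA hB hC hD
    rw [integral_sub (f := fun t => A t + B t - C t) ((hA.add hB).sub hC) hD,
      integral_sub (f := fun t => A t + B t) (hA.add hB) hC, integral_add hA hB]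
  rw [integral_const_mul, comb (h _).1 (h _).1 (h _).1 (h _).1,
    (h _).2, (h _).2, (h _).2, (h _).2]
  ring

/-! ### Decay of the functions `H_k` -/

/-- The Laplace-type integral `∫₀^∞ s e^{(iℓ - s) t} (s - iℓ)^{-k} ds`. For `t > 0` it is the `k`-fold
iterated tail integral of `e^{iℓt} / t²`. -/
def lap (k : ℕ) (l t : ℝ) : ℂ :=
  ∫ s in Ioi (0:ℝ), (s:ℂ) * Complex.exp ((l * I - s) * t) / ((s:ℂ) - l * I) ^ k

lemma sub_mul_I_ne_zero {l : ℝ} (hl : 0 < l) (s : ℝ) : (s:ℂ) - l * I ≠ 0 := by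
  intro h
  have := congrArg Complex.im h
  simp at this
  exact hl.ne' this

lemma norm_lap_integrand_le (k : ℕ) {l : ℝ} (hl : 0 < l) (t : ℝ) {s : ℝ} (hs : 0 < s) :
    ‖(s:ℂ) * Complex.exp ((l * I - s) * t) / ((s:ℂ) - l * I) ^ k‖
      ≤ (1 / l ^ k) * (s * Real.exp (-(s * t))) := by
  rw [norm_div, norm_mul, Complex.norm_exp, norm_pow, Complex.norm_real, Real.norm_of_nonneg hs.le]
  have h1 : l ≤ ‖(s:ℂ) - l * I‖ := by
    have := Complex.abs_im_le_norm ((s:ℂ) - l * I)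
    simpa [abs_of_pos hl] using this
  have h2 : ((l * I - s) * t : ℂ).re = -(s * t) := by simp
  rw [h2, div_eq_inv_mul, one_div]
  gcongr

lemma lap_integrand_continuous (k : ℕ) {l : ℝ} (hl : 0 < l) :
    Continuous (Function.uncurry fun (t s : ℝ) =>
      (s:ℂ) * Complex.exp ((l * I - s) * t) / ((s:ℂ) - l * I) ^ k) := by
  simp only [Function.uncurry_def]
  exact Continuous.div (by fun_prop) (by fun_prop) fun x => pow_ne_zero _ (sub_mul_I_ne_zero hl _)

lemma lap_zero (l : ℝ) {t : ℝ} (ht : 0 < t) : lap 0 l t = Complex.exp (l * t * I) / t ^ 2 := by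
  have e : ∀ s : ℝ, (s:ℂ) * Complex.exp ((l * I - s) * t) / ((s:ℂ) - l * I) ^ 0
      = ((s * Real.exp (-(s * t)) : ℝ) : ℂ) * Complex.exp (l * t * I) := by
    intro s
    rw [pow_zero, div_one, Complex.ofReal_mul, mul_assoc, Complex.ofReal_exp, ← Complex.exp_add]
    congr 2
    push_cast
    ring
  rw [lap, integral_congr_ae (Filter.Eventually.of_forall e), integral_mul_const,
    integral_complex_ofReal, integral_id_mul_exp_neg ht]
  push_cast
  ring

lemma norm_lap_le (k : ℕ) {l : ℝ} (hl : 0 < l) {t : ℝ} (ht : 0 < t) :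
    ‖lap k l t‖ ≤ (1 / l ^ k) * (1 / t ^ 2) := by
  rw [lap, ← integral_id_mul_exp_neg ht, ← integral_const_mul]
  apply norm_integral_le_of_norm_le ((integrableOn_id_mul_exp_neg ht).const_mul _)
  filter_upwards [ae_restrict_mem measurableSet_Ioi] with s hs
  exact norm_lap_integrand_le k hl t hs

lemma integrableOn_one_div_sq {t : ℝ} (ht : 0 < t) :
    IntegrableOn (fun x : ℝ => 1 / x ^ 2) (Ioi t) := by
  refine (integrableOn_Ioi_rpow_of_lt (a := -2) (by norm_num) ht).congr_fun (fun x hx => ?_)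
    measurableSet_Ioi
  have : 0 < x := ht.trans hx
  simp only
  rw [Real.rpow_neg this.le, one_div]
  norm_num

/-- Tail integration raises the index of `lap` by one. -/
lemma integral_lap (k : ℕ) {l : ℝ} (hl : 0 < l) {t : ℝ} (ht : 0 < t) :
    IntegrableOn (lap k l) (Ioi t) ∧ ∫ x in Ioi t, lap k l x = lap (k + 1) l t := by
  have hint : Integrable (Function.uncurry fun (x s : ℝ) =>
      (s:ℂ) * Complex.exp ((l * I - s) * x) / ((s:ℂ) - l * I) ^ k)
      ((volume.restrict (Ioi t)).prod (volume.restrict (Ioi 0))) := by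
    have hm := (lap_integrand_continuous k hl).aestronglyMeasurable
      (μ := (volume.restrict (Ioi t)).prod (volume.restrict (Ioi 0)))
    rw [integrable_prod_iff hm]
    have hx : ∀ x ∈ Ioi t, Integrable (fun s : ℝ =>
        (s:ℂ) * Complex.exp ((l * I - s) * x) / ((s:ℂ) - l * I) ^ k)
        (volume.restrict (Ioi 0)) := by
      intro x hx
      refine Integrable.mono' ((integrableOn_id_mul_exp_neg (ht.trans hx)).const_mul (1 / l ^ k))
        ?_ ?_
      · exact ((lap_integrand_continuous k hl).comp (by fun_prop : Continuous fun s : ℝ =>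
          (x, s))).aestronglyMeasurable
      · filter_upwards [ae_restrict_mem measurableSet_Ioi] with s hs
        exact norm_lap_integrand_le k hl x hs
    constructor
    · filter_upwards [ae_restrict_mem measurableSet_Ioi] with x hx'
      exact hx x hx'
    · refine Integrable.mono' ((integrableOn_one_div_sq ht).const_mul (1 / l ^ k))
        hm.norm.integral_prod_right' ?_
      filter_upwards [ae_restrict_mem measurableSet_Ioi] with x hx'
      rw [Real.norm_of_nonneg (integral_nonneg fun _ => norm_nonneg _),
        ← integral_id_mul_exp_neg (ht.trans hx'), ← integral_const_mul]
      apply setIntegral_mono_on (hx x hx').norm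
        ((integrableOn_id_mul_exp_neg (ht.trans hx')).const_mul _) measurableSet_Ioi
      intro s hs
      exact norm_lap_integrand_le k hl x hs
  refine ⟨hint.integral_prod_left, ?_⟩
  simp only [lap]
  rw [integral_integral_swap hint]
  refine setIntegral_congr_fun measurableSet_Ioi fun s hs => ?_
  have hs' : (0:ℝ) < s := hs
  have hne := sub_mul_I_ne_zero hl s
  have hne' : (l * I - s : ℂ) ≠ 0 := by
    rw [← neg_sub]
    exact neg_ne_zero.2 hne
  rw [integral_div, integral_const_mul, integral_exp_mul_complex_Ioi (by simpa using hs'),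
    ← neg_sub (s:ℂ), pow_succ]
  field_simp

/-- The analytic formula for `Hf k` on `(0, ∞)`; the oscillation of the kernel keeps all the
iterated tail integrals of order `t⁻²`. -/
lemma Hf_eq_lap (k : ℕ) : ∀ t : ℝ, 0 < t →
    Hf k t = ((1/2 : ℂ) * (lap k 1 t - lap k 2 t)).re := by
  induction k with
  | zero =>
    intro t ht
    rw [lap_zero _ ht, lap_zero _ ht, Hf]
    have e1 : (Complex.exp ((1:ℝ) * t * I)).re = Real.cos t := by
      rw [Complex.exp_re]; simp
    have e2 : (Complex.exp ((2:ℝ) * t * I)).re = Real.cos (2 * t) := by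
      rw [Complex.exp_re]; simp
    rw [← sub_div, show ((1/2 : ℂ)) = ((1/2 : ℝ) : ℂ) by norm_num, Complex.re_ofReal_mul,
      ← Complex.ofReal_pow, Complex.div_ofReal_re, Complex.sub_re, e1, e2]
    ring
  | succ k ih =>
    intro t ht
    obtain ⟨i1, v1⟩ := integral_lap k one_pos ht
    obtain ⟨i2, v2⟩ := integral_lap k two_pos ht
    rw [Hf, ← v1, ← v2, ← integral_sub i1 i2, ← integral_const_mul]
    have := integral_re (𝕜 := ℂ) ((i1.sub i2).const_mul (1/2 : ℂ))
    refine Eq.trans ?_ this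
    exact setIntegral_congr_fun measurableSet_Ioi fun x hx => ih x (ht.trans hx)

lemma abs_Hf_le (k : ℕ) {t : ℝ} (ht : 0 < t) : |Hf k t| ≤ 1 / t ^ 2 := by
  rw [Hf_eq_lap k t ht]
  refine (Complex.abs_re_le_norm _).trans ?_
  rw [norm_mul]
  have h1 := norm_lap_le k one_pos ht
  have h2 := norm_lap_le k two_pos ht
  have h3 := norm_sub_le (lap k 1 t) (lap k 2 t)
  have h4 : (1:ℝ) / 2 ^ k ≤ 1 := by
    rw [div_le_one (by positivity)]
    exact one_le_pow₀ (by norm_num)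
  have h5 : 1 / 2 ^ k * (1 / t ^ 2) ≤ 1 * (1 / t ^ 2) := by gcongr
  simp only [one_pow, div_one, one_mul] at h1 h5
  have : ‖(1/2 : ℂ)‖ = 1/2 := by norm_num
  rw [this]
  linarith

lemma Hf_succ_eq {k : ℕ} (ih : IntegrableOn (Hf k) (Ioi 0)) {t : ℝ} (ht : 0 ≤ t) :
    Hf (k + 1) t = (∫ x in Ioi (0:ℝ), Hf k x) - ∫ x in (0:ℝ)..t, indicator (Ioi 0) (Hf k) x := by
  rw [Hf, ← intervalIntegral.integral_interval_add_Ioi ih (ih.mono_set (Ioi_subset_Ioi ht)),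
    intervalIntegral.integral_of_le ht, intervalIntegral.integral_of_le ht,
    setIntegral_congr_fun measurableSet_Ioc (fun x hx => indicator_of_mem (s := Ioi (0:ℝ)) hx.1 (Hf k))]
  ring

lemma continuousOn_Hf_succ {k : ℕ} (ih : IntegrableOn (Hf k) (Ioi 0)) :
    ContinuousOn (Hf (k + 1)) (Ici 0) := by
  have hg : Integrable (indicator (Ioi 0) (Hf k)) :=
    (integrable_indicator_iff measurableSet_Ioi).2 ih
  have := intervalIntegral.continuous_primitive
    (fun a b => hg.intervalIntegrable (a := a) (b := b)) 0
  exact ContinuousOn.congr (f := fun t => (∫ x in Ioi (0:ℝ), Hf k x) -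
    ∫ x in (0:ℝ)..t, indicator (Ioi 0) (Hf k) x) (by fun_prop) fun t ht => Hf_succ_eq ih ht

lemma integrableOn_Hf (k : ℕ) : IntegrableOn (Hf k) (Ioi 0) := by
  induction k with
  | zero => simpa using (integral_cos_mul_Hf_zero 0).1
  | succ k ih =>
    -- Boundedness controls the part near `0`, the decay `t⁻²` the rest.
    have hb : ∀ t : ℝ, 0 ≤ t → |Hf (k + 1) t| ≤ ∫ x in Ioi (0:ℝ), |Hf k x| := by
      intro t ht
      rw [Hf]
      refine (abs_integral_le_integral_abs).trans ?_
      exact setIntegral_mono_set ih.abs (Filter.Eventually.of_forall fun _ => abs_nonneg _)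
        (Ioi_subset_Ioi ht).eventuallyLE
    have hc := continuousOn_Hf_succ ih
    rw [← Ioc_union_Ioi_eq_Ioi (zero_le_one (α := ℝ)), integrableOn_union]
    constructor
    · exact ((hc.mono Icc_subset_Ici_self).integrableOn_Icc (b := 1)).mono_set Ioc_subset_Icc_self
    · refine Integrable.mono' (integrableOn_one_div_sq one_pos) ?_ ?_
      · exact (hc.mono fun x hx => (zero_le_one.trans (le_of_lt hx) : (0:ℝ) ≤ x)).aestronglyMeasurable
          measurableSet_Ioi
      · filter_upwards [ae_restrict_mem measurableSet_Ioi] with x hx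
        exact abs_Hf_le _ (one_pos.trans hx)

lemma continuousOn_Hf (k : ℕ) : ContinuousOn (Hf k) (Ioi 0) := by
  cases k with
  | zero =>
    have : ContinuousOn (fun t : ℝ => (Real.cos t - Real.cos (2*t)) / 2 / t ^ 2) (Ioi 0) :=
      ContinuousOn.div (by fun_prop) (by fun_prop) fun x hx => pow_ne_zero _ (ne_of_gt hx)
    exact this.congr fun t _ => by rw [Hf]
  | succ k => exact (continuousOn_Hf_succ (integrableOn_Hf k)).mono Ioi_subset_Ici_self

lemma hasDerivAt_Hf_succ (k : ℕ) {t : ℝ} (ht : 0 < t) :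
    HasDerivAt (Hf (k + 1)) (-Hf k t) t := by
  have hg : Integrable (indicator (Ioi 0) (Hf k)) :=
    (integrable_indicator_iff measurableSet_Ioi).2 (integrableOn_Hf k)
  have hev : indicator (Ioi 0) (Hf k) =ᶠ[nhds t] Hf k :=
    Filter.mem_of_superset (Ioi_mem_nhds ht) fun x hx => indicator_of_mem hx _
  have hcont : ContinuousAt (indicator (Ioi 0) (Hf k)) t :=
    ((continuousOn_Hf k).continuousAt (Ioi_mem_nhds ht)).congr hev.symm
  have h := (intervalIntegral.integral_hasDerivAt_right (hg.intervalIntegrable (a := 0) (b := t))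
    (hg.aestronglyMeasurable.stronglyMeasurableAtFilter) hcont).const_sub
      (∫ x in Ioi (0:ℝ), Hf k x)
  rw [indicator_of_mem (show t ∈ Ioi (0:ℝ) from ht)] at h
  exact h.congr_of_eventuallyEq
    (Filter.mem_of_superset (Ioi_mem_nhds ht) fun x hx => Hf_succ_eq (integrableOn_Hf k) (le_of_lt hx))

lemma tendsto_Hf (k : ℕ) : Filter.Tendsto (Hf k) Filter.atTop (nhds 0) := by
  have h : Filter.Tendsto (fun t : ℝ => 1 / t ^ 2) Filter.atTop (nhds 0) := by
    simpa only [one_div, Function.comp_def] using tendsto_inv_atTop_zero.comp (Filter.tendsto_pow_atTop (α := ℝ) two_ne_zero)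
  refine squeeze_zero_norm' ?_ h
  filter_upwards [Filter.eventually_gt_atTop 0] with t ht
  exact abs_Hf_le k ht

/-! ### Fourier transforms of the functions `H_k` -/

/-- The one-sided Fourier transform `∫₀^∞ e^{ixt} H_k(t) dt`. -/
def ftS (k : ℕ) (x : ℝ) : ℂ := ∫ t in Ioi (0:ℝ), Complex.exp (x * t * I) * (Hf k t : ℂ)

/-- The integral `∫₀^∞ (e^{ixt} + (-1)^k e^{-ixt}) H_k(t) dt`, that is, the Fourier transform of the
extension of `H_k` to the line with parity `(-1)^k`. -/
def ftT (k : ℕ) (x : ℝ) : ℂ := ftS k x + (-1) ^ k * ftS k (-x)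

lemma norm_exp_mul_I_mul (x t : ℝ) (w : ℂ) : ‖Complex.exp (x * t * I) * w‖ = ‖w‖ := by
  rw [norm_mul, ← Complex.ofReal_mul, Complex.norm_exp_ofReal_mul_I, one_mul]

lemma integrableOn_exp_mul_Hf (k : ℕ) (x : ℝ) :
    IntegrableOn (fun t : ℝ => Complex.exp (x * t * I) * (Hf k t : ℂ)) (Ioi 0) := by
  refine Integrable.mono (integrableOn_Hf k) ?_ (Filter.Eventually.of_forall fun t => ?_)
  · exact AEStronglyMeasurable.mul (by fun_prop)
      (Complex.continuous_ofReal.comp_aestronglyMeasurable (integrableOn_Hf k).aestronglyMeasurable)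
  · rw [norm_exp_mul_I_mul, Complex.norm_real]

lemma continuous_ftS (k : ℕ) : Continuous (ftS k) := by
  refine continuous_of_dominated (bound := fun t => ‖Hf k t‖)
    (fun x => (integrableOn_exp_mul_Hf k x).aestronglyMeasurable)
    (fun x => Filter.Eventually.of_forall fun t => ?_) (integrableOn_Hf k).norm
    (Filter.Eventually.of_forall fun t => by fun_prop)
  rw [norm_exp_mul_I_mul, Complex.norm_real]

lemma continuous_ftT (k : ℕ) : Continuous (ftT k) := by
  have := continuous_ftS k
  unfold ftT
  fun_prop

lemma ofReal_Hf_succ_zero (k : ℕ) : (Hf (k + 1) 0 : ℂ) = ftS k 0 := by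
  rw [Hf, ftS, ← integral_complex_ofReal]
  simp

/-- Integration by parts on `(0, ∞)`, with boundary value `H_{k+1}(0) = ftS k 0`. -/
lemma mul_ftS_succ (k : ℕ) (x : ℝ) : (x * I) * ftS (k + 1) x = ftS k x - ftS k 0 := by
  have h1 := integrableOn_exp_mul_Hf (k + 1) x
  have h2 := integrableOn_exp_mul_Hf k x
  have key := integral_Ioi_of_hasDerivAt_of_tendsto (a := 0) (m := (0:ℂ))
    (f := fun t : ℝ => Complex.exp (x * t * I) * (Hf (k + 1) t : ℂ))
    (f' := fun t : ℝ => (x * I) * (Complex.exp (x * t * I) * (Hf (k + 1) t : ℂ)) -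
      Complex.exp (x * t * I) * (Hf k t : ℂ)) ?_ ?_ ((h1.const_mul _).sub h2) ?_
  · rw [integral_sub (h1.const_mul _) h2, integral_const_mul, ofReal_Hf_succ_zero] at key
    simp only [ofReal_zero, mul_zero, zero_mul, Complex.exp_zero, one_mul, zero_sub] at key
    rw [← ftS, ← ftS] at key
    linear_combination key
  · refine ContinuousWithinAt.mul (by fun_prop) ?_
    exact Complex.continuous_ofReal.continuousAt.comp_continuousWithinAt
      (continuousOn_Hf_succ (integrableOn_Hf k) 0 self_mem_Ici)
  · intro t ht
    have hd : HasDerivAt (fun t : ℝ => Complex.exp (x * t * I)) (Complex.exp (x * t * I) * (x * 1 * I)) t := by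
      have h := ((((hasDerivAt_id (t:ℂ)).const_mul (x:ℂ)).mul_const I).cexp).comp_ofReal
      simpa using h
    convert! hd.mul (hasDerivAt_Hf_succ k ht).ofReal_comp using 1
    push_cast
    ring
  · rw [tendsto_zero_iff_norm_tendsto_zero]
    simp only [norm_exp_mul_I_mul, Complex.norm_real]
    simpa using (tendsto_Hf (k + 1)).norm

lemma mul_ftT_succ (k : ℕ) (x : ℝ) : (x * I) * ftT (k + 1) x = ftT k x - ftT k 0 := by
  have h1 := mul_ftS_succ k x
  have h2 := mul_ftS_succ k (-x)
  simp only [ftT, neg_zero]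
  push_cast at h2
  rw [pow_succ]
  linear_combination h1 + (-1) ^ k * h2

lemma ftT_zero (x : ℝ) :
    ftT 0 x = ((Real.pi / 4 * (|2 + x| + |2 - x| - |1 + x| - |1 - x|) : ℝ) : ℂ) := by
  have h := (integral_cos_mul_Hf_zero x).2
  rw [ftT, pow_zero, one_mul, ftS, ftS, ← integral_add (integrableOn_exp_mul_Hf 0 x)
    (integrableOn_exp_mul_Hf 0 (-x))]
  have e : ∀ t : ℝ, Complex.exp (x * t * I) * (Hf 0 t : ℂ) +
      Complex.exp ((-x : ℝ) * t * I) * (Hf 0 t : ℂ) = 2 * ((Real.cos (x * t) * Hf 0 t : ℝ) : ℂ) := by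
    intro t
    push_cast
    rw [Complex.cos, neg_mul]
    ring
  rw [integral_congr_ae (Filter.Eventually.of_forall e), integral_const_mul,
    integral_complex_ofReal, h]
  push_cast
  ring

/-- The transform of `H_0` is constant near the origin, so each later transform vanishes there. In
particular `ftT (k + 1) 0 = 0`: the boundary terms disappear after the first integration by parts. -/
lemma ftT_succ_eq_zero (k : ℕ) : ∀ x : ℝ, |x| < 1 → ftT (k + 1) x = 0 := by
  have step : ∀ k, (∀ x : ℝ, |x| < 1 → ftT k x = ftT k 0) →
      ∀ x : ℝ, |x| < 1 → ftT (k + 1) x = 0 := by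
    intro k hk
    have hne : ∀ x : ℝ, x ≠ 0 → |x| < 1 → ftT (k + 1) x = 0 := by
      intro x hx0 hx
      have h := mul_ftT_succ k x
      rw [hk x hx, sub_self] at h
      exact (mul_eq_zero.1 h).resolve_left
        (mul_ne_zero (Complex.ofReal_ne_zero.2 hx0) I_ne_zero)
    intro x hx
    rcases eq_or_ne x 0 with rfl | hx0
    · have h1 : Filter.Tendsto (ftT (k + 1)) (nhdsWithin 0 {0}ᶜ) (nhds (ftT (k + 1) 0)) :=
        ((continuous_ftT (k + 1)).tendsto 0).mono_left nhdsWithin_le_nhds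
      refine tendsto_nhds_unique h1 (Filter.Tendsto.congr' ?_ tendsto_const_nhds)
      have hball : {y : ℝ | |y| < 1} ∈ nhds (0:ℝ) :=
        (isOpen_lt continuous_abs continuous_const).mem_nhds (by simp)
      filter_upwards [self_mem_nhdsWithin, mem_nhdsWithin_of_mem_nhds hball] with y hy0 hy
      exact (hne y hy0 hy).symm
    · exact hne x hx0 hx
  induction k with
  | zero =>
    refine step 0 fun x hx => ?_
    rw [abs_lt] at hx
    rw [ftT_zero, ftT_zero, abs_of_pos (by linarith : 0 < 2 + x), abs_of_pos (by linarith : 0 < 2 - x),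
      abs_of_pos (by linarith : 0 < 1 + x), abs_of_pos (by linarith : 0 < 1 - x)]
    congr 1
    norm_num
    ring
  | succ k ih => exact step (k + 1) fun x hx => by rw [ih x hx, ih 0 (by simp)]

lemma ftT_zero_zero : ftT 0 0 = Real.pi / 2 := by
  rw [ftT_zero]
  norm_num
  ring

/-- The reproducing property: at frequencies `x ≥ 2` the transform of the kernel, multiplied by
`(ix)^k`, is the constant `-π/2`. -/
lemma pow_mul_ftT (k : ℕ) {x : ℝ} (hx : 2 ≤ x) :
    (x * I) ^ (k + 1) * ftT (k + 1) x = -(Real.pi / 2) := by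
  induction k with
  | zero =>
    rw [zero_add, pow_one, mul_ftT_succ, ftT_zero_zero, ftT_zero, abs_of_pos (by linarith : 0 < 2 + x),
      abs_of_nonpos (by linarith : 2 - x ≤ 0), abs_of_pos (by linarith : 0 < 1 + x),
      abs_of_neg (by linarith : 1 - x < 0)]
    push_cast
    ring
  | succ k ih =>
    rw [pow_succ, mul_assoc, mul_ftT_succ, ftT_succ_eq_zero k 0 (by simp), sub_zero, ih]

/-- Holds because `∫₀^∞ H_0 = π/4`. -/
lemma one_le_Cc_zero : 1 ≤ Cc 0 := by
  have h := (integral_cos_mul_Hf_zero 0).2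
  simp only [zero_mul, Real.cos_zero, one_mul] at h
  norm_num at h
  have h2 := abs_integral_le_integral_abs (f := Hf 0) (μ := volume.restrict (Ioi (0:ℝ)))
  rw [h] at h2
  have h3 := (le_abs_self _).trans h2
  have hpi := Real.pi_pos
  rw [Cc]
  calc (1:ℝ) = 4 / Real.pi * (Real.pi / 8 * 2) := by field_simp; norm_num
    _ ≤ _ := by gcongr

/-! ### Taylor coefficients of angular derivatives and rotation averages -/

lemma mem_unitDisc {z : ℂ} : z ∈ unitDisc ↔ ‖z‖ < 1 := by simp [unitDisc]

lemma exp_mul_mem_unitDisc (θ : ℝ) {z : ℂ} :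
    Complex.exp (θ * I) * z ∈ unitDisc ↔ z ∈ unitDisc := by
  rw [mem_unitDisc, mem_unitDisc, norm_mul, Complex.norm_exp_ofReal_mul_I, one_mul]

lemma differentiableOn_Dth {g : ℂ → ℂ} (hg : DifferentiableOn ℂ g unitDisc) :
    DifferentiableOn ℂ (Dth g) unitDisc :=
  DifferentiableOn.mul (by fun_prop) (hg.deriv isOpen_ball)

/-- The angular derivative multiplies the `n`-th Taylor coefficient by `i n`. -/
lemma hasSum_Dth {g : ℂ → ℂ} (hg : DifferentiableOn ℂ g unitDisc) {b : ℕ → ℂ}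
    (hb : ∀ z ∈ unitDisc, HasSum (fun n => b n * z ^ n) (g z)) :
    ∀ z ∈ unitDisc, HasSum (fun n : ℕ => (I * n) * b n * z ^ n) (Dth g z) := by
  set a : ℕ → ℂ := fun n => (n.factorial : ℂ)⁻¹ * iteratedDeriv n g 0 with ha
  have hat : ∀ z ∈ unitDisc, HasSum (fun n => a n * z ^ n) (g z) := by
    intro z hz
    convert! Complex.hasSum_taylorSeries_on_ball hg hz using 2 with n
    simp [ha]
    ring
  have hU : unitDisc ∈ nhds (0:ℂ) := ball_mem_nhds 0 one_pos
  have toPS : ∀ c : ℕ → ℂ, (∀ z ∈ unitDisc, HasSum (fun n => c n * z ^ n) (g z)) →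
      HasFPowerSeriesAt g (FormalMultilinearSeries.ofScalars ℂ c) 0 := by
    intro c hc
    rw [hasFPowerSeriesAt_iff]
    filter_upwards [hU] with z hz
    simpa [FormalMultilinearSeries.coeff_ofScalars, mul_comm] using hc z hz
  have hba : b = a := by
    funext n
    have := congrArg (fun p => FormalMultilinearSeries.coeff p n)
      ((toPS b hb).eq_formalMultilinearSeries (toPS a hat))
    simpa [FormalMultilinearSeries.coeff_ofScalars] using this
  intro z hz
  have h := (Complex.hasSum_taylorSeries_on_ball (hg.deriv isOpen_ball) hz).mul_left (I * z)
  rw [hba, ← hasSum_nat_add_iff' 1]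
  change HasSum _ (I * z * deriv g z - _)
  simp only [Finset.range_one, Finset.sum_singleton, Nat.cast_zero, mul_zero, zero_mul, sub_zero]
  convert! h using 2 with n
  rw [ha, ← iteratedDeriv_succ']
  have : ((n:ℂ) + 1) ≠ 0 := by exact_mod_cast n.succ_ne_zero
  have : (n.factorial : ℂ) ≠ 0 := by exact_mod_cast n.factorial_ne_zero
  simp only [smul_eq_mul, sub_zero, Nat.factorial_succ]
  push_cast
  field_simp
  ring

/-- One coefficient sequence `a` (the Taylor coefficients of `f`) serves all orders `K`. -/
lemma exists_hasSum_iterate_Dth {f : ℂ → ℂ} (hf : DifferentiableOn ℂ f unitDisc) :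
    ∃ a : ℕ → ℂ, ∀ K : ℕ, DifferentiableOn ℂ (Dth^[K] f) unitDisc ∧
      ∀ z ∈ unitDisc, HasSum (fun n : ℕ => (I * n) ^ K * a n * z ^ n) (Dth^[K] f z) := by
  refine ⟨fun n => (n.factorial : ℂ)⁻¹ * iteratedDeriv n f 0, fun K => ?_⟩
  induction K with
  | zero =>
    refine ⟨hf, fun z hz => ?_⟩
    convert! Complex.hasSum_taylorSeries_on_ball hf hz using 2 with n
    simp
    ring
  | succ K ih =>
    rw [Function.iterate_succ_apply']
    refine ⟨differentiableOn_Dth ih.1, fun z hz => ?_⟩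
    convert! hasSum_Dth ih.1 ih.2 z hz using 2 with n
    ring

/-- Averaging the rotations of `g` against the kernel acts on Taylor coefficients as the
multiplier `ftS k (c n)`. -/
lemma hasSum_rotation_average (k : ℕ) (c : ℝ) {g : ℂ → ℂ} {b : ℕ → ℂ}
    (hb : ∀ z ∈ unitDisc, HasSum (fun n => b n * z ^ n) (g z)) {z : ℂ} (hz : z ∈ unitDisc) :
    HasSum (fun n : ℕ => ftS k (c * n) * (b n * z ^ n))
      (∫ t in Ioi (0:ℝ), g (Complex.exp ((c * t : ℝ) * I) * z) * (Hf k t : ℂ)) := by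
  have hF : ∀ n : ℕ, Integrable (fun t : ℝ =>
      (Complex.exp ((c * n : ℝ) * t * I) * (Hf k t : ℂ)) * (b n * z ^ n))
      (volume.restrict (Ioi 0)) := fun n => (integrableOn_exp_mul_Hf k (c * n)).mul_const _
  have hs : Summable fun n : ℕ => ∫ t in Ioi (0:ℝ),
      ‖(Complex.exp ((c * n : ℝ) * t * I) * (Hf k t : ℂ)) * (b n * z ^ n)‖ := by
    simp only [norm_mul _ (b _ * z ^ _), norm_exp_mul_I_mul, integral_mul_const]
    exact ((hb z hz).summable.norm).mul_left _
  have h := hasSum_integral_of_summable_integral_norm hF hs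
  simp only [integral_mul_const] at h
  convert! h using 1
  refine integral_congr_ae (Filter.Eventually.of_forall fun t => ?_)
  have h1 := (hb _ ((exp_mul_mem_unitDisc (c * t)).2 hz)).mul_right (Hf k t : ℂ)
  simp only
  rw [← h1.tsum_eq]
  refine tsum_congr fun n => ?_
  rw [mul_pow, ← Complex.exp_nat_mul]
  push_cast
  rw [show (n:ℂ) * (c * t * I) = c * n * t * I by ring]
  ring

/-! ### Minkowski's inequality for rotation averages -/

/-- The `p`-th power of the weighted norm as a lower integral, so that it takes the value `∞` where
`bNorm` has the junk value `0`. -/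
def bPow (p α : ℝ) (g : ℂ → ℂ) : ENNReal :=
  ∫⁻ z in unitDisc, ‖g z‖ₑ ^ p * ENNReal.ofReal (wt α z)

lemma ofReal_norm_rpow_mul {p : ℝ} (hp : 0 ≤ p) (w : ℂ) (r : ℝ) :
    ENNReal.ofReal (‖w‖ ^ p * r) = ‖w‖ₑ ^ p * ENNReal.ofReal r := by
  rw [ENNReal.ofReal_mul (by positivity), ← ENNReal.ofReal_rpow_of_nonneg (norm_nonneg _) hp,
    ofReal_norm]

/-- When the integral diverges both sides are `0 ^ (1 / p)`. -/
lemma bNorm_eq {p α : ℝ} (hp : 0 ≤ p) (hα : -1 < α) {g : ℂ → ℂ}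
    (hg : ContinuousOn g unitDisc) : bNorm p α g = (bPow p α g).toReal ^ (1 / p) := by
  have hU : MeasurableSet unitDisc := measurableSet_ball
  rw [bNorm, bPow, integral_eq_lintegral_of_nonneg_ae]
  · simp only [ofReal_norm_rpow_mul hp]
  · filter_upwards [ae_restrict_mem hU] with z hz
    have := wt_nonneg hα hz
    simp only [Pi.zero_apply]
    positivity
  · refine AEStronglyMeasurable.mul ?_ (measurable_wt α).aestronglyMeasurable
    exact ((hg.norm.rpow_const fun _ _ => Or.inr hp).aestronglyMeasurable hU)

lemma bPow_ne_top {p α : ℝ} (hp : 0 ≤ p) {g : ℂ → ℂ} (hg : MemAp p α g) : bPow p α g ≠ ⊤ := by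
  have := hg.2.lintegral_lt_top
  simp only [ofReal_norm_rpow_mul hp] at this
  exact this.ne

lemma lintegral_rotation (Φ : ℂ → ENNReal) (θ : ℝ) :
    ∫⁻ z in unitDisc, Φ (Complex.exp (θ * I) * z) = ∫⁻ z in unitDisc, Φ z := by
  have h := (rotation (Circle.exp θ)).measurePreserving.setLIntegral_comp_preimage_emb
    (rotation (Circle.exp θ)).toHomeomorph.measurableEmbedding Φ unitDisc
  rw [← h]
  congr 1
  congr 1
  ext z
  exact (exp_mul_mem_unitDisc θ).symm

/-- Minkowski's integral inequality for averages of rotations, by Jensen's inequality for the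
finite measure `|H_k(t)| dt` and the rotation invariance of `dA_α`. -/
lemma bPow_rotation_average_le {p : ℝ} (hp : 1 < p) (α : ℝ) (k : ℕ) (c : ℝ) {g R : ℂ → ℂ}
    (hg : DifferentiableOn ℂ g unitDisc)
    (hR : ∀ z ∈ unitDisc, ‖R z‖ₑ ≤ ∫⁻ t in Ioi (0:ℝ), ‖Hf k t‖ₑ *
      (‖g (Complex.exp ((c * t : ℝ) * I) * z)‖ₑ + ‖g (Complex.exp ((-c * t : ℝ) * I) * z)‖ₑ)) :
    bPow p α R ≤ (2 * ∫⁻ t in Ioi (0:ℝ), ‖Hf k t‖ₑ) ^ p * bPow p α g := by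
  have hU : MeasurableSet unitDisc := measurableSet_ball
  set ρ : Measure ℝ := (volume.restrict (Ioi 0)).withDensity fun t => ‖Hf k t‖ₑ with hρ
  have hHm : AEMeasurable (fun t => ‖Hf k t‖ₑ) (volume.restrict (Ioi (0:ℝ))) :=
    (integrableOn_Hf k).aestronglyMeasurable.enorm
  have hρu : ρ univ = ∫⁻ t in Ioi (0:ℝ), ‖Hf k t‖ₑ := by
    rw [hρ, withDensity_apply _ MeasurableSet.univ, Measure.restrict_univ]
  set J : ENNReal := ∫⁻ t in Ioi (0:ℝ), ‖Hf k t‖ₑ with hJ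
  -- A globally measurable function with the same values on the disc.
  set G : ℂ → ℂ := indicator unitDisc g with hG
  have hGm : Measurable G := by
    classical
    rw [hG, ← piecewise_eq_indicator]
    exact hg.continuousOn.measurable_piecewise continuousOn_const hU
  have hGg : ∀ (θ : ℝ) {z : ℂ}, z ∈ unitDisc →
      G (Complex.exp (θ * I) * z) = g (Complex.exp (θ * I) * z) := fun θ z hz =>
    indicator_of_mem ((exp_mul_mem_unitDisc θ).2 hz) _
  obtain ⟨u, hu⟩ : ∃ u : ℝ → ℝ → ℂ → ENNReal,
      ∀ d t z, u d t z = ‖G (Complex.exp ((d * t : ℝ) * I) * z)‖ₑ := ⟨_, fun _ _ _ => rfl⟩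
  have hum : ∀ d, Measurable (Function.uncurry (u d)) := by
    intro d
    have : Measurable fun q : ℝ × ℂ => Complex.exp ((d * q.1 : ℝ) * I) * q.2 :=
      Continuous.measurable (by fun_prop)
    simp only [Function.uncurry_def, hu]
    exact (hGm.comp this).enorm
  have hum1 : ∀ d z, Measurable fun t => u d t z := fun d z =>
    (hum d).comp measurable_prodMk_right
  have hs1 : ∀ z, Measurable fun t => u c t z + u (-c) t z := fun z => (hum1 c z).add (hum1 (-c) z)
  have hsp : ∀ z, Measurable fun t => u c t z ^ p + u (-c) t z ^ p := fun z =>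
    ((hum1 c z).pow_const p).add ((hum1 (-c) z).pow_const p)
  have hpos : 0 < p := by linarith
  have hp1 : 0 ≤ p - 1 := by linarith
  have jensen : ∀ z ∈ unitDisc, ‖R z‖ₑ ^ p ≤
      (J ^ (p - 1) * 2 ^ (p - 1)) * ∫⁻ t, (u c t z ^ p + u (-c) t z ^ p) ∂ρ := by
    intro z hz
    have h1 : ‖R z‖ₑ ≤ ∫⁻ t, (u c t z + u (-c) t z) ∂ρ := by
      rw [hρ, lintegral_withDensity_eq_lintegral_mul₀ hHm
        (hs1 z).aemeasurable]
      refine (hR z hz).trans (le_of_eq (lintegral_congr fun t => ?_))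
      simp only [hu, Pi.mul_apply, hGg _ hz]
    have hq := Real.HolderConjugate.conjExponent hp
    have h2 := ENNReal.lintegral_mul_le_Lp_mul_Lq ρ hq
      (f := fun t => u c t z + u (-c) t z) (g := fun _ => 1)
      (hs1 z).aemeasurable aemeasurable_const
    simp only [Pi.mul_apply, mul_one, ENNReal.one_rpow, lintegral_const, one_mul] at h2
    rw [hρu] at h2
    have h3 := ENNReal.rpow_le_rpow (h1.trans h2) hpos.le
    rw [ENNReal.mul_rpow_of_nonneg _ _ hpos.le, ← ENNReal.rpow_mul, ← ENNReal.rpow_mul,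
      one_div_mul_cancel hpos.ne', ENNReal.rpow_one] at h3
    have e : 1 / p.conjExponent * p = p - 1 := by
      rw [Real.conjExponent]
      have : p - 1 ≠ 0 := by linarith
      field_simp
    rw [e] at h3
    refine h3.trans ?_
    rw [mul_comm, mul_assoc]
    gcongr
    rw [← lintegral_const_mul _ (hsp z)]
    exact lintegral_mono fun t => ENNReal.rpow_add_le_mul_rpow_add_rpow _ _ hp.le
  have slice : ∀ d t, ∫⁻ z in unitDisc, u d t z ^ p * ENNReal.ofReal (wt α z) = bPow p α g := by
    intro d t
    have hw : ∀ z, wt α z = wt α (Complex.exp ((d * t : ℝ) * I) * z) := by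
      intro z
      rw [wt, wt, norm_mul, Complex.norm_exp_ofReal_mul_I, one_mul]
    have h := lintegral_rotation (fun z => ‖G z‖ₑ ^ p * ENNReal.ofReal (wt α z)) (d * t)
    simp only [← hw] at h
    simp only [hu]
    refine h.trans (setLIntegral_congr_fun hU fun z hz => ?_)
    simp only [hG, indicator_of_mem hz]
  have hWm : Measurable fun z => ENNReal.ofReal (wt α z) := (measurable_wt α).ennreal_ofReal
  calc bPow p α R
      ≤ ∫⁻ z in unitDisc, (J ^ (p - 1) * 2 ^ (p - 1)) *
          ∫⁻ t, (u c t z ^ p * ENNReal.ofReal (wt α z) +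
            u (-c) t z ^ p * ENNReal.ofReal (wt α z)) ∂ρ := by
        refine setLIntegral_mono' hU fun z hz => ?_
        simp only [← add_mul]
        rw [lintegral_mul_const _ (hsp z),
          ← mul_assoc]
        gcongr
        exact jensen z hz
    _ = (J ^ (p - 1) * 2 ^ (p - 1)) * ∫⁻ t, (∫⁻ z in unitDisc,
          (u c t z ^ p * ENNReal.ofReal (wt α z) +
            u (-c) t z ^ p * ENNReal.ofReal (wt α z))) ∂ρ := by
        have hm : ∀ d, Measurable fun q : ℂ × ℝ => u d q.2 q.1 ^ p * ENNReal.ofReal (wt α q.1) :=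
          fun d => (((hum d).comp measurable_swap).pow_const p).mul (hWm.comp measurable_fst)
        have hm2 : Measurable fun q : ℂ × ℝ => u c q.2 q.1 ^ p * ENNReal.ofReal (wt α q.1) +
            u (-c) q.2 q.1 ^ p * ENNReal.ofReal (wt α q.1) := (hm c).add (hm (-c))
        rw [lintegral_const_mul _ hm2.lintegral_prod_right',
          lintegral_lintegral_swap hm2.aemeasurable]
    _ = (J ^ (p - 1) * 2 ^ (p - 1)) * (2 * bPow p α g * J) := by
        have hm : ∀ d t, Measurable fun z => u d t z ^ p * ENNReal.ofReal (wt α z) := fun d t =>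
          (((hum d).comp measurable_prodMk_left).pow_const p).mul hWm
        have : ∀ t, ∫⁻ z in unitDisc, (u c t z ^ p * ENNReal.ofReal (wt α z) +
            u (-c) t z ^ p * ENNReal.ofReal (wt α z)) = 2 * bPow p α g := by
          intro t
          rw [lintegral_add_left (hm c t), slice, slice, two_mul]
        simp only [this]
        rw [lintegral_const, hρu]
    _ = (2 * J) ^ p * bPow p α g := by
        have h : ∀ a : ENNReal, a ^ p = a ^ (p - 1) * a := by
          intro a
          conv_lhs => rw [show p = (p - 1) + 1 by ring]
          rw [ENNReal.rpow_add_of_nonneg _ _ hp1 zero_le_one, ENNReal.rpow_one]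
        rw [ENNReal.mul_rpow_of_nonneg _ _ hpos.le, h 2, h J]
        ring

/-! ### Polynomial approximation -/

lemma bNorm_nonneg {p α : ℝ} (hα : -1 < α) (g : ℂ → ℂ) : 0 ≤ bNorm p α g := by
  refine Real.rpow_nonneg (setIntegral_nonneg measurableSet_ball fun z hz => ?_) _
  exact mul_nonneg (Real.rpow_nonneg (norm_nonneg _) _) (wt_nonneg hα hz)

lemma polyErr_le {p α : ℝ} (hα : -1 < α) {n : ℕ} {f : ℂ → ℂ} (P : Polynomial ℂ)
    (hP : P.natDegree ≤ n) : polyErr p α n f ≤ bNorm p α fun z => f z - P.eval z := by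
  refine csInf_le ⟨0, ?_⟩ ⟨P, hP, rfl⟩
  rintro e ⟨Q, -, rfl⟩
  exact bNorm_nonneg hα _

/-- The average of the rotations of `D_θ^{k+1} f` against `H_{k+1}` at scale `n / 2`, suitably
normalized, has the Taylor coefficients of `f` from index `n` on, hence differs from `f` by a
polynomial. -/
lemma exists_polynomial_eq_average {f : ℂ → ℂ} (hf : DifferentiableOn ℂ f unitDisc) (k : ℕ)
    {n : ℕ} (hn : 1 ≤ n) :
    ∃ P : Polynomial ℂ, P.natDegree ≤ n ∧ ∀ z ∈ unitDisc, f z - P.eval z =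
      -((2 / Real.pi * (2 / n) ^ (k + 1) : ℝ) : ℂ) *
        ((∫ t in Ioi (0:ℝ), Dth^[k + 1] f (Complex.exp ((2 / n * t : ℝ) * I) * z) * (Hf (k + 1) t : ℂ)) +
        (-1) ^ (k + 1) * ∫ t in Ioi (0:ℝ),
          Dth^[k + 1] f (Complex.exp ((-(2 / n) * t : ℝ) * I) * z) * (Hf (k + 1) t : ℂ)) := by
  obtain ⟨a, ha⟩ := exists_hasSum_iterate_Dth hf
  have hn0 : (0:ℝ) < n := by exact_mod_cast hn
  set q : ℂ := ((2 / Real.pi * (2 / n) ^ (k + 1) : ℝ) : ℂ) with hq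
  -- The Taylor coefficients of `f` minus the normalized average.
  let coef : ℕ → ℂ := fun j =>
    a j + q * (ftT (k + 1) (2 / n * j) * ((I * j) ^ (k + 1) * a j))
  have hcoef : ∀ j, n ≤ j → coef j = 0 := by
    intro j hj
    have hj' : (n:ℝ) ≤ j := by exact_mod_cast hj
    have hx : (2:ℝ) ≤ 2 / n * j := by
      rw [div_mul_eq_mul_div, le_div_iff₀ hn0]
      linarith
    have h := pow_mul_ftT k hx
    have e : q * (I * j) ^ (k + 1) = (2 / Real.pi) * (((2 / n * j : ℝ) : ℂ) * I) ^ (k + 1) := by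
      rw [hq]
      push_cast
      rw [mul_assoc, ← mul_pow]
      ring
    have hpi : (Real.pi : ℂ) ≠ 0 := Complex.ofReal_ne_zero.2 Real.pi_ne_zero
    calc coef j = a j + (q * (I * j) ^ (k + 1)) * ftT (k + 1) (2 / n * j) * a j := by
          simp only [coef]; ring
      _ = a j + (2 / Real.pi) * ((((2 / n * j : ℝ) : ℂ) * I) ^ (k + 1) *
            ftT (k + 1) (2 / n * j)) * a j := by rw [e]; ring
      _ = 0 := by
          rw [h]
          field_simp
          ring
  refine ⟨∑ j ∈ Finset.range n, Polynomial.C (coef j) * Polynomial.X ^ j, ?_, fun z hz => ?_⟩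
  · refine Polynomial.natDegree_sum_le_of_forall_le _ _ fun j hj => ?_
    exact (Polynomial.natDegree_C_mul_X_pow_le _ _).trans (Finset.mem_range.1 hj).le
  · have h0 := (ha 0).2 z hz
    simp only [pow_zero, one_mul, Function.iterate_zero, id] at h0
    have h1 := hasSum_rotation_average (k + 1) (2 / n) (ha (k + 1)).2 hz
    have h2 := hasSum_rotation_average (k + 1) (-(2 / n)) (ha (k + 1)).2 hz
    have h3 := h0.add ((h1.add (h2.mul_left ((-1) ^ (k + 1)))).mul_left q)
    have h4 : HasSum (fun j => coef j * z ^ j) (∑ j ∈ Finset.range n, coef j * z ^ j) :=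
      hasSum_sum_of_ne_finset_zero fun j hj => by
        rw [hcoef j (by simpa using hj), zero_mul]
    have h5 := h4.unique (h3.congr_fun ?_)
    · rw [Polynomial.eval_finsetSum]
      simp only [Polynomial.eval_mul, Polynomial.eval_C, Polynomial.eval_pow, Polynomial.eval_X]
      rw [h5]
      ring
    · intro j
      simp only [coef, ftT, neg_mul]
      ring

lemma polyErr_zero_order {p α M : ℝ} (hα : -1 < α) {n : ℕ} {f : ℂ → ℂ} (hM : bNorm p α f ≤ M) :
    polyErr p α n f ≤ Cc 0 * M := by
  have h := polyErr_le (p := p) hα (n := n) (f := f) 0 (by simp)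
  simp only [Polynomial.eval_zero, sub_zero] at h
  have h1 := one_le_Cc_zero
  nlinarith [bNorm_nonneg (p := p) hα f]

/-- If the `K`-th angular derivative of `f ∈ A^p_α` satisfies
`‖D_θ^K f‖_{p,α} ≤ M`, then `E_n^{p,α}(f) ≤ 2^K C_K M n^{-K}` for every `n ≥ 1`. -/
theorem polyErr_le_of_deriv_bound
    (p α M : ℝ) (hp : 1 < p) (hα : -1 < α) (K : ℕ)
    (f : ℂ → ℂ) (hf : MemAp p α f) (hDf : MemAp p α (Dth^[K] f))
    (hM : bNorm p α (Dth^[K] f) ≤ M)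
    (n : ℕ) (hn : 1 ≤ n) :
    polyErr p α n f ≤ 2 ^ K * Cc K * M * (n : ℝ) ^ (-(K : ℝ)) := by
  cases K with
  | zero => simpa using polyErr_zero_order hα hM
  | succ k =>
    have hp0 : 0 < p := by linarith
    have hn0 : (0:ℝ) < n := by exact_mod_cast hn
    obtain ⟨P, hPn, hP⟩ := exists_polynomial_eq_average hf.1 k hn
    set g := Dth^[k + 1] f with hg
    set q : ℝ := 2 / Real.pi * (2 / n) ^ (k + 1) with hq
    have hq0 : 0 < q := by
      have := Real.pi_pos
      positivity
    set A : ℝ := ∫ t in Ioi (0:ℝ), |Hf (k + 1) t| with hA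
    have hA0 : 0 ≤ A := integral_nonneg fun _ => abs_nonneg _
    have hJ : ∫⁻ t in Ioi (0:ℝ), ‖Hf (k + 1) t‖ₑ = ENNReal.ofReal A := by
      rw [hA, ← ofReal_integral_norm_eq_lintegral_enorm (integrableOn_Hf (k + 1))]
      simp only [Real.norm_eq_abs]
    let R : ℂ → ℂ := fun z =>
      (∫ t in Ioi (0:ℝ), g (Complex.exp ((2 / n * t : ℝ) * I) * z) * (Hf (k + 1) t : ℂ)) +
        (-1) ^ (k + 1) * ∫ t in Ioi (0:ℝ),
          g (Complex.exp ((-(2 / n) * t : ℝ) * I) * z) * (Hf (k + 1) t : ℂ)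
    have hR := bPow_rotation_average_le hp α (k + 1) (2 / n) (g := g) (R := R) hDf.1 ?_
    · have hfP : bPow p α (fun z => f z - P.eval z)
          ≤ ENNReal.ofReal ((q * (2 * A)) ^ p) * bPow p α g := by
        have h1 : bPow p α (fun z => f z - P.eval z) = ENNReal.ofReal q ^ p * bPow p α R := by
          rw [bPow, bPow, ← lintegral_const_mul' _ _ (by simp [hp0.le])]
          refine setLIntegral_congr_fun measurableSet_ball fun z hz => ?_
          rw [hP z hz, enorm_mul, ENNReal.mul_rpow_of_nonneg _ _ hp0.le, mul_assoc, enorm_neg,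
            ← ofReal_norm, Complex.norm_real, Real.norm_of_nonneg hq0.le]
        rw [h1, ← ENNReal.ofReal_rpow_of_nonneg (by positivity) hp0.le, ENNReal.ofReal_mul hq0.le,
          ENNReal.ofReal_mul zero_le_two, ENNReal.mul_rpow_of_nonneg _ _ hp0.le, mul_assoc, ← hJ]
        gcongr
        simpa using hR
      have hcont : ContinuousOn (fun z => f z - P.eval z) unitDisc :=
        hf.1.continuousOn.sub P.continuous.continuousOn
      have hbound : bNorm p α (fun z => f z - P.eval z) ≤ q * (2 * A) * bNorm p α g := by
        rw [bNorm_eq hp0.le hα hcont, bNorm_eq hp0.le hα hDf.1.continuousOn]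
        have h2 := ENNReal.toReal_mono
          (ENNReal.mul_ne_top ENNReal.ofReal_ne_top (bPow_ne_top hp0.le hDf)) hfP
        rw [ENNReal.toReal_mul, ENNReal.toReal_ofReal (by positivity)] at h2
        refine (Real.rpow_le_rpow ENNReal.toReal_nonneg h2 (by positivity)).trans (le_of_eq ?_)
        rw [Real.mul_rpow (by positivity) ENNReal.toReal_nonneg, ← Real.rpow_mul (by positivity),
          mul_one_div_cancel hp0.ne', Real.rpow_one]
      refine (polyErr_le hα P hPn).trans (hbound.trans ?_)
      calc q * (2 * A) * bNorm p α g ≤ q * (2 * A) * M := by gcongr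
        _ = 2 ^ (k + 1) * Cc (k + 1) * M * (n:ℝ) ^ (-((k + 1 : ℕ) : ℝ)) := by
          rw [Real.rpow_neg hn0.le, Real.rpow_natCast, Cc, ← hA, hq, div_pow]
          field_simp
          ring
    · intro z _
      calc ‖R z‖ₑ ≤ ‖∫ t in Ioi (0:ℝ), g (Complex.exp ((2 / n * t : ℝ) * I) * z) * (Hf (k + 1) t : ℂ)‖ₑ
            + ‖∫ t in Ioi (0:ℝ), g (Complex.exp ((-(2 / n) * t : ℝ) * I) * z) * (Hf (k + 1) t : ℂ)‖ₑ := by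
            refine (enorm_add_le _ _).trans (le_of_eq ?_)
            rw [enorm_mul, enorm_pow, enorm_neg, enorm_one, one_pow, one_mul]
        _ ≤ _ := add_le_add (enorm_integral_le_lintegral_enorm _) (enorm_integral_le_lintegral_enorm _)
        _ ≤ _ := by
            refine (le_lintegral_add _ _).trans (le_of_eq (lintegral_congr fun t => ?_))
            have : ‖(Hf (k + 1) t : ℂ)‖ₑ = ‖Hf (k + 1) t‖ₑ := by
              rw [← ofReal_norm, Complex.norm_real, ofReal_norm]
            simp only [enorm_mul, this]
            ring
end
end
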